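/- Let X = (X₁,…,Xₙ) follow the general Curie–Weiss model CW(ρ) at β=1, where ρ is symmetric with support in [−L,L], ∫x²dρ=1, h(s)=s²/2−log∫e^{sx}dρ has s=0 as unique root of h'=0, and k≥2 satisfies h^{(i)}(0)=0 for 0≤i≤2k−1, h^{(2k)}(0)>0. Set G(w)=h^{(2k)}(0)·w^{2k}/(2k)!, W = n^{−1+1/(2k)}·(X₁+⋯+Xₙ), and for s>0 define ζ(W,s) = e^{G(W)−G(W−s)} if W>s, e^{G(W)} if 0≤W≤s, and 1 if W<0; let F^{(i)} = σ(X_j : j≠i). Suppose conditions (2.8), (2.9), (r2.2-a), (r2.2-b) of the paper hold (E(K̂₁|W) ≤ d₀; δ|g(W)| ≤ d₁; |R(W)| ≤ α(|g(W)|+1)+d₂·I(|W|>κ) with 0≤α<1; d₂·P(|W|>κ) ≤ d₃·e^{−2s₀/(d₁δ)} with s₀ = max{s : δ·s·g(s)² ≤ 1}, for the exchangeable-pair Stein identity associated with W). Then there is a constant C > 0 depending only on ρ such that E( | (1/n)·Σ_{i=1}^n ( Xᵢ² − E(Xᵢ²|F^{(i)}) ) |·ζ(W,s) ) ≤ C·n^{−1/k}·(1+|s|²)·E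 ζ(W,s). -/

import Mathlib

open MeasureTheory Real

/-- The Gibbs measure of the general Curie–Weiss model `CW(ρ)` at inverse
temperature `β = 1`. -/
noncomputable def cwMeasure (ρ : Measure ℝ) [IsProbabilityMeasure ρ] (n : ℕ) :
    Measure (Fin n → ℝ) :=
  (Measure.pi fun _ : Fin n => ρ).withDensity fun x =>
    ENNReal.ofReal (Real.exp ((∑ i, x i) ^ 2 / (2 * n)) /
      ∫ y : Fin n → ℝ, Real.exp ((∑ i, y i) ^ 2 / (2 * n))
        ∂(Measure.pi fun _ : Fin n => ρ))

/-- `h(s) = s²/2 − log ∫ e^{sx} dρ(x)`. -/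
noncomputable def hfun (ρ : Measure ℝ) (s : ℝ) : ℝ :=
  s ^ 2 / 2 - Real.log (∫ x, Real.exp (s * x) ∂ρ)

/-- `G(w) = h^{(2k)}(0) w^{2k} / (2k)!`. -/
noncomputable def cwG (ρ : Measure ℝ) (k : ℕ) (w : ℝ) : ℝ :=
  iteratedDeriv (2 * k) (hfun ρ) 0 * w ^ (2 * k) / Nat.factorial (2 * k)

/-- `g(w) = h^{(2k)}(0) w^{2k−1} / (2k−1)!`. -/
noncomputable def cwg (ρ : Measure ℝ) (k : ℕ) (w : ℝ) : ℝ :=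
  iteratedDeriv (2 * k) (hfun ρ) 0 * w ^ (2 * k - 1) / Nat.factorial (2 * k - 1)

/-- `W = n^{−1+1/(2k)} (X₁ + ⋯ + Xₙ)`. -/
noncomputable def cwW (n k : ℕ) (x : Fin n → ℝ) : ℝ :=
  (n : ℝ) ^ (-(1 : ℝ) + 1 / (2 * (k : ℝ))) * ∑ i, x i

/-- `ζ(w, s)`: `e^{G(w)−G(w−s)}` for `w > s`, `e^{G(w)}` for `0 ≤ w ≤ s`, `1` for `w < 0`. -/
noncomputable def zeta (G : ℝ → ℝ) (s w : ℝ) : ℝ :=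
  if w < 0 then 1 else if w ≤ s then Real.exp (G w) else Real.exp (G w - G (w - s))

/-- The σ-algebra `F⁽ⁱ⁾ = σ(X_j, j ≠ i)`. -/
noncomputable def Fi (n : ℕ) (i : Fin n) : MeasurableSpace (Fin n → ℝ) :=
  MeasurableSpace.comap (fun x => Function.update x i 0) inferInstance

/-- The general Stein identity (2.1). -/
def SteinIdentity {Ω : Type} [MeasurableSpace Ω] (μ : Measure Ω)
    (W R : Ω → ℝ) (Khat : Ω → ℝ → ℝ) (g : ℝ → ℝ) (δ : ℝ) : Prop :=
  ∀ f : ℝ → ℝ, Differentiable ℝ f →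
    Integrable (fun ω => f (W ω) * g (W ω)) μ →
    Integrable (fun ω => ∫ t in (-δ)..δ, deriv f (W ω + t) * Khat ω t) μ →
    Integrable (fun ω => f (W ω) * R ω) μ →
    ∫ ω, f (W ω) * g (W ω) ∂μ
      = (∫ ω, (∫ t in (-δ)..δ, deriv f (W ω + t) * Khat ω t) ∂μ)
        + ∫ ω, f (W ω) * R ω ∂μ

/-- `K̂₁ = ∫_{|t|≤δ} K̂(t) dt`. -/
noncomputable def KhatOne {Ω : Type} (Khat : Ω → ℝ → ℝ) (δ : ℝ) (ω : Ω) : ℝ :=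
  ∫ t in (-δ)..δ, Khat ω t

/-!
Put `r = n^{-1/(2k)}`, `σ = s r` and `S = X₁ + ⋯ + Xₙ`. Multiplying `ζ(W, s)` by the Gibbs weight
gives `e^{n φ(S/n)}` for an explicit `φ` which is uniformly convex with bounded curvature on
`[-L, L]`. Hence `e^{n φ(u)}` is comparable, up to constants, with
`√n ∫_{-L}^{L} e^{n (φ(v) + φ'(v) (u - v))} dv`: the weighted law is comparable with a mixture over
`v` of product measures of the tilted laws `e^{φ'(v) x} ρ(dx)`. The mixing density is `e^{n Ψ(v)}`
with `Ψ(v) ≤ -c v^{2k}` away from `0 < v ≲ σ`, so `v²` has mean `O(r² + σ²)` under it.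

The vanishing derivatives of `h` force `∫ x dρ = ∫ x³ dρ = 0` and `∫ x² dρ = 1`. Under a tilt by
`t x` the mean of `x²` is therefore `1 + O(t²)`, so the average of `Xᵢ² - 1` has absolute mean
`O(1/√n + t²)`. Given the other spins, `Xᵢ` has law `ρ` tilted by `x²/(2n) + x (S - Xᵢ)/n`, so
`E(Xᵢ² | F⁽ⁱ⁾) = 1 + O((S/n)² + 1/n)`. Since `1/√n ≤ r²`, averaging over the mixture gives
`O(r² (1 + s²))`.
-/

open ProbabilityTheory Filter Set Topology

section PowerComparison

variable {f : ℝ → ℝ} {N : ℕ}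

lemma tendsto_div_pow_of_iteratedDeriv_eq_zero (hf : ContDiff ℝ N f)
    (hder : ∀ i < N, iteratedDeriv i f 0 = 0) :
    Tendsto (fun t => f t / t ^ N) (𝓝[≠] 0) (𝓝 (iteratedDeriv N f 0 / N.factorial)) := by
  have htaylor : ∀ t,
      taylorWithinEval f N univ 0 t = iteratedDeriv N f 0 / N.factorial * t ^ N := by
    intro t
    rw [taylor_within_apply, Finset.sum_range_succ, Finset.sum_eq_zero]
    · simp only [iteratedDerivWithin_univ, sub_zero, smul_eq_mul, zero_add]
      ring
    · intro i hi
      rw [iteratedDerivWithin_univ, hder i (Finset.mem_range.1 hi), smul_zero]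
  have hlittleO := ((taylor_isLittleO_univ (x₀ := 0) hf).mono
    (nhdsWithin_le_nhds (s := {0}ᶜ))).tendsto_div_nhds_zero
  refine tendsto_sub_nhds_zero_iff.1 (hlittleO.congr' ?_)
  filter_upwards [self_mem_nhdsWithin] with t ht
  rw [htaylor, sub_zero, sub_div, mul_div_cancel_right₀ _ (pow_ne_zero _ ht)]

lemma pos_of_deriv_ne_zero_of_eventually_pos (hf : Continuous f) (h0 : f 0 = 0)
    (hderiv : ∀ s, s ≠ 0 → deriv f s ≠ 0) (hnear : ∀ᶠ t in 𝓝[≠] 0, 0 < f t) {t : ℝ}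
    (ht : t ≠ 0) : 0 < f t := by
  have hne : ∀ s, s ≠ 0 → f s ≠ 0 := by
    intro s hs hfs
    rcases lt_or_gt_of_ne hs with hlt | hgt
    · obtain ⟨c, hc, hc0⟩ := exists_deriv_eq_zero hlt hf.continuousOn (hfs.trans h0.symm)
      exact hderiv c hc.2.ne hc0
    · obtain ⟨c, hc, hc0⟩ := exists_deriv_eq_zero hgt hf.continuousOn (h0.trans hfs.symm)
      exact hderiv c hc.1.ne' hc0
  have hscale : Tendsto (fun ε : ℝ => ε * t) (𝓝[>] 0) (𝓝[≠] 0) := by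
    refine tendsto_nhdsWithin_iff.2 ⟨?_, ?_⟩
    · exact ((continuous_mul_const t).tendsto' 0 0 (zero_mul t)).mono_left nhdsWithin_le_nhds
    · filter_upwards [self_mem_nhdsWithin] with ε hε
      exact mul_ne_zero (ne_of_gt hε) ht
  obtain ⟨ε, hpos, hε0, hε1⟩ :=
    ((hscale.eventually hnear).and (Ioo_mem_nhdsGT (zero_lt_one' ℝ))).exists
  by_contra! hneg
  obtain ⟨z, hz, hz0⟩ : (0 : ℝ) ∈ (fun ε => f (ε * t)) '' Icc ε 1 :=
    intermediate_value_Icc' hε1.le (by fun_prop) ⟨by simpa using hneg, hpos.le⟩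
  exact hne _ (mul_ne_zero (hε0.trans_le hz.1).ne' ht) hz0

lemma exists_mul_pow_le_and_le_mul_pow {a : ℝ} (hf : Continuous f) (h0 : f 0 = 0)
    (hpos : ∀ t, t ≠ 0 → 0 < f t) (hN : Even N) (hN0 : N ≠ 0) (ha : 0 < a)
    (hlim : Tendsto (fun t => f t / t ^ N) (𝓝[≠] 0) (𝓝 a)) (T : ℝ) :
    ∃ c C : ℝ, 0 < c ∧ 0 < C ∧ ∀ t, |t| ≤ T → c * t ^ N ≤ f t ∧ f t ≤ C * t ^ N := by
  set q : ℝ → ℝ := Function.update (fun t => f t / t ^ N) 0 a with hq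
  have hq_mul : ∀ t, q t * t ^ N = f t := by
    intro t
    rcases eq_or_ne t 0 with rfl | ht
    · rw [h0, zero_pow hN0, mul_zero]
    · rw [hq, Function.update_of_ne ht, div_mul_cancel₀ _ (pow_ne_zero _ ht)]
  have hq_pos : ∀ t, 0 < q t := by
    intro t
    rcases eq_or_ne t 0 with rfl | ht
    · rwa [hq, Function.update_self]
    · rw [hq, Function.update_of_ne ht]
      exact div_pos (hpos t ht) (hN.pow_pos ht)
  have hq_cont : Continuous q := by
    rw [continuous_iff_continuousAt]
    intro t
    rcases eq_or_ne t 0 with rfl | ht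
    · exact continuousAt_update_same.2 hlim
    · exact (continuousAt_update_of_ne ht).2
        (hf.continuousAt.div (by fun_prop) (pow_ne_zero _ ht))
  rcases (Icc (-T) T).eq_empty_or_nonempty with hempty | hne
  · exact ⟨1, 1, one_pos, one_pos, fun t ht => (hempty.subset (abs_le.1 ht)).elim⟩
  obtain ⟨t₁, -, hmin⟩ := isCompact_Icc.exists_isMinOn hne hq_cont.continuousOn
  obtain ⟨t₂, -, hmax⟩ := isCompact_Icc.exists_isMaxOn hne hq_cont.continuousOn
  refine ⟨q t₁, q t₂, hq_pos t₁, hq_pos t₂, fun t ht => ?_⟩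
  rw [← hq_mul t]
  exact ⟨mul_le_mul_of_nonneg_right (hmin (abs_le.1 ht)) (hN.pow_nonneg t),
    mul_le_mul_of_nonneg_right (hmax (abs_le.1 ht)) (hN.pow_nonneg t)⟩

end PowerComparison

section BoundedSupport

variable {L : ℝ}

lemma integrable_of_continuous_of_ae_mem_isCompact {X E : Type*} [TopologicalSpace X]
    [T2Space X] [MeasurableSpace X] [OpensMeasurableSpace X] [NormedAddCommGroup E]
    [SecondCountableTopologyEither X E] {μ : Measure X} [IsFiniteMeasureOnCompacts μ] {K : Set X}
    (hK : IsCompact K) (hμ : ∀ᵐ x ∂μ, x ∈ K) {f : X → E} (hf : Continuous f) :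
    Integrable f μ := by
  have h := hf.continuousOn.integrableOn_compact' (μ := μ) hK hK.measurableSet
  rwa [IntegrableOn, Measure.restrict_eq_self_of_ae_mem hμ] at h

lemma integrable_of_continuous_of_ae_abs_le {ν : Measure ℝ} [IsFiniteMeasure ν]
    (hν : ∀ᵐ x ∂ν, |x| ≤ L) {f : ℝ → ℝ} (hf : Continuous f) : Integrable f ν :=
  integrable_of_continuous_of_ae_mem_isCompact (K := Icc (-L) L) isCompact_Icc
    (hν.mono fun _ hx => abs_le.1 hx) hf

lemma ae_pi_abs_le {ι : Type*} [Fintype ι] {μ : ι → Measure ℝ} [∀ i, SigmaFinite (μ i)]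
    (hμ : ∀ i, ∀ᵐ x ∂μ i, |x| ≤ L) : ∀ᵐ x ∂Measure.pi μ, ∀ i, |x i| ≤ L :=
  ae_all_iff.2 fun i => (Measure.tendsto_eval_ae_ae (μ := μ) (i := i)).eventually (hμ i)

lemma integrable_pi_of_continuous_of_ae_abs_le {ι : Type*} [Finite ι] {P : Measure (ι → ℝ)}
    [IsFiniteMeasure P] (hP : ∀ᵐ x ∂P, ∀ i, |x i| ≤ L) {f : (ι → ℝ) → ℝ} (hf : Continuous f) :
    Integrable f P :=
  integrable_of_continuous_of_ae_mem_isCompact (K := univ.pi fun _ => Icc (-L) L)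
    (isCompact_univ_pi fun _ => isCompact_Icc) (hP.mono fun _ hx i _ => abs_le.1 (hx i)) hf

end BoundedSupport

section LogMomentGeneratingFunction

lemma hfun_eq_sub_cgf (ρ : Measure ℝ) : hfun ρ = fun t => t ^ 2 / 2 - cgf id ρ t := rfl

variable {ρ : Measure ℝ} [IsProbabilityMeasure ρ] {L : ℝ}

lemma integrableExpSet_id_eq_univ (hρ : ∀ᵐ x ∂ρ, |x| ≤ L) : integrableExpSet id ρ = univ :=
  eq_univ_of_forall fun _ => integrable_of_continuous_of_ae_abs_le hρ (by fun_prop)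

lemma contDiff_hfun (hρ : ∀ᵐ x ∂ρ, |x| ≤ L) (N : ℕ) : ContDiff ℝ N (hfun ρ) := by
  have hcgf : ContDiff ℝ N (cgf id ρ) := contDiff_iff_contDiffAt.2 fun t =>
    (analyticAt_cgf (by simp [integrableExpSet_id_eq_univ hρ])).contDiffAt
  rw [hfun_eq_sub_cgf]
  fun_prop

lemma mgf_id_eq_exp_sub_hfun (hρ : ∀ᵐ x ∂ρ, |x| ≤ L) (t : ℝ) :
    mgf id ρ t = exp (t ^ 2 / 2 - hfun ρ t) := by
  have hint : Integrable (fun x => exp (t * id x)) ρ :=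
    integrable_of_continuous_of_ae_abs_le hρ (by fun_prop)
  rw [hfun_eq_sub_cgf, sub_sub_cancel, exp_cgf hint]

lemma hasDerivAt_mgf_id (hρ : ∀ᵐ x ∂ρ, |x| ≤ L) (t : ℝ) :
    HasDerivAt (mgf id ρ) ((t - deriv (hfun ρ) t) * mgf id ρ t) t := by
  have hh : HasDerivAt (hfun ρ) (deriv (hfun ρ) t) t :=
    ((contDiff_hfun hρ 1).differentiable (by norm_num) t).hasDerivAt
  have hexp := (((hasDerivAt_pow 2 t).div_const 2).sub hh).exp
  rw [funext (mgf_id_eq_exp_sub_hfun hρ)]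
  exact hexp.congr_deriv (by simp only [Pi.sub_apply]; push_cast; ring)

lemma integral_pow_succ_eq_sum (hρ : ∀ᵐ x ∂ρ, |x| ≤ L) (n : ℕ) :
    ∫ x, x ^ (n + 1) ∂ρ = ∑ i ∈ Finset.range (n + 1), n.choose i *
      iteratedDeriv i (fun t => t - deriv (hfun ρ) t) 0 * ∫ x, x ^ (n - i) ∂ρ := by
  have hset : (0 : ℝ) ∈ interior (integrableExpSet id ρ) := by
    simp [integrableExpSet_id_eq_univ hρ]
  have hmoment : ∀ m, ∫ x, x ^ m ∂ρ = iteratedDeriv m (mgf id ρ) 0 := fun m => by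
    simp [iteratedDeriv_mgf_zero hset]
  have hdh : ContDiff ℝ n (deriv (hfun ρ)) :=
    ContDiff.deriv' (by exact_mod_cast contDiff_hfun hρ (n + 1))
  have hmgf : ContDiffAt ℝ n (mgf id ρ) 0 := (analyticAt_mgf hset).contDiffAt
  simp only [hmoment]
  rw [iteratedDeriv_succ', funext fun t => (hasDerivAt_mgf_id hρ t).deriv]
  exact iteratedDeriv_fun_mul (by fun_prop) hmgf

lemma integral_pow_of_iteratedDeriv_hfun_eq_zero (hρ : ∀ᵐ x ∂ρ, |x| ≤ L)
    (hder : ∀ i ≤ 3, iteratedDeriv i (hfun ρ) 0 = 0) :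
    ∫ x, x ∂ρ = 0 ∧ ∫ x, x ^ 2 ∂ρ = 1 ∧ ∫ x, x ^ 3 ∂ρ = 0 := by
  have hdh : ContDiff ℝ 2 (deriv (hfun ρ)) :=
    ContDiff.deriv' (by exact_mod_cast contDiff_hfun hρ 3)
  set u : ℝ → ℝ := fun t => t - deriv (hfun ρ) t
  have hdrift : ∀ i ≤ 2, iteratedDeriv i u 0 = iteratedDeriv i (fun t : ℝ => t) 0 := by
    intro i hi
    have hi' : (i : WithTop ℕ∞) ≤ 2 := by exact_mod_cast hi
    rw [iteratedDeriv_fun_sub (by fun_prop) (hdh.of_le hi').contDiffAt, ← iteratedDeriv_succ',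
      hder _ (by omega), sub_zero]
  have hzero : deriv (hfun ρ) 0 = 0 := by simpa using hder 1 (by norm_num)
  have hone : iteratedDeriv 1 u 0 = 1 := by
    rw [hdrift 1 (by norm_num), iteratedDeriv_one, deriv_id'']
  have htwo : iteratedDeriv 2 u 0 = 0 := by
    rw [hdrift 2 le_rfl, iteratedDeriv_succ, iteratedDeriv_one, deriv_id'', deriv_const]
  have m1 : ∫ x, x ∂ρ = 0 := by simpa [hzero] using integral_pow_succ_eq_sum hρ 0
  refine ⟨m1, ?_, ?_⟩
  · simpa [Finset.sum_range_succ, u, hzero, hone] using integral_pow_succ_eq_sum hρ 1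
  · simpa [Finset.sum_range_succ, u, hzero, hone, htwo, m1] using integral_pow_succ_eq_sum hρ 2

end LogMomentGeneratingFunction

section ProductMeasures

variable {n : ℕ} {α : Type*} [MeasurableSpace α]

lemma pi_tilted {ι : Type*} [Fintype ι] {X : ι → Type*} [∀ i, MeasurableSpace (X i)]
    (μ : ∀ i, Measure (X i)) [∀ i, IsFiniteMeasure (μ i)] (f : ∀ i, X i → ℝ) :
    (Measure.pi μ).tilted (fun x => ∑ i, f i (x i)) = Measure.pi fun i => (μ i).tilted (f i) := by
  refine (Measure.pi_eq fun s hs => ?_).symm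
  simp only [tilted_apply_eq_ofReal_integral' _ (MeasurableSet.univ_pi hs),
    tilted_apply_eq_ofReal_integral' _ (hs _), Measure.restrict_pi_pi, exp_sum]
  rw [integral_fintype_prod_eq_prod (fun i x => exp (f i x)),
    ← ENNReal.ofReal_prod_of_nonneg fun i _ => by positivity]
  simp only [← Finset.prod_div_distrib]
  rw [integral_fintype_prod_eq_prod (fun i x => exp (f i x) / ∫ x, exp (f i x) ∂μ i)]

lemma integral_exp_mul_sum_mul (ρ : Measure ℝ) [IsProbabilityMeasure ρ]
    (t : ℝ) (f : (Fin n → ℝ) → ℝ) (ht : Integrable (fun x => exp (t * x)) ρ) :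
    ∫ x, exp (t * ∑ i, x i) * f x ∂Measure.pi (fun _ => ρ) =
      mgf id ρ t ^ n * ∫ x, f x ∂Measure.pi fun _ => ρ.tilted (t * ·) := by
  have hsum : ∀ x : Fin n → ℝ, t * ∑ i, x i = ∑ i, t * x i := fun x => Finset.mul_sum ..
  have hZ : ∫ x : Fin n → ℝ, exp (∑ i, t * x i) ∂Measure.pi (fun _ => ρ) = mgf id ρ t ^ n := by
    simp only [exp_sum]
    rw [integral_fintype_prod_eq_prod (fun _ x => exp (t * x)), Finset.prod_const,
      Finset.card_univ, Fintype.card_fin]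
    rfl
  have hZ_pos : 0 < mgf id ρ t ^ n := pow_pos (mgf_pos ht) n
  rw [← pi_tilted (fun _ => ρ) (fun _ => (t * ·)), integral_tilted, hZ, ← integral_const_mul]
  simp only [hsum, smul_eq_mul]
  congr with x
  field_simp

variable {ν : Measure α} [IsProbabilityMeasure ν] {φ : α → ℝ}

lemma memLp_average_pi (hφ : MemLp φ 2 ν) :
    MemLp (fun x : Fin n → α => 1 / (n : ℝ) * ∑ i, φ (x i)) 2 (Measure.pi fun _ => ν) :=
  (memLp_finsetSum _ fun i _ => hφ.comp_measurePreserving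
    (measurePreserving_eval (fun _ : Fin n => ν) i)).const_mul _

lemma integral_average_pi (hn : n ≠ 0) (hφ : Integrable φ ν) :
    ∫ x : Fin n → α, 1 / (n : ℝ) * ∑ i, φ (x i) ∂Measure.pi (fun _ => ν) = ∫ x, φ x ∂ν := by
  have hint : ∀ i : Fin n, Integrable (fun x => φ (x i)) (Measure.pi fun _ => ν) := fun i =>
    integrable_comp_eval hφ
  rw [integral_const_mul, integral_finsetSum _ fun i _ => hint i]
  simp only [integral_comp_eval (μ := fun _ : Fin n => ν) hφ.aestronglyMeasurable]
  rw [Finset.sum_const, Finset.card_univ, Fintype.card_fin, nsmul_eq_mul, ← mul_assoc,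
    one_div_mul_cancel (Nat.cast_ne_zero.2 hn), one_mul]

lemma variance_average_pi (hn : n ≠ 0) (hφ : MemLp φ 2 ν) :
    Var[fun x : Fin n → α => 1 / (n : ℝ) * ∑ i, φ (x i); Measure.pi fun _ => ν] =
      Var[φ; ν] / n := by
  have hsum := variance_sum_pi (μ := fun _ : Fin n => ν) (X := fun _ => φ) fun _ => hφ
  rw [Finset.sum_const, Finset.card_univ, Fintype.card_fin, nsmul_eq_mul] at hsum
  rw [variance_const_mul, ← Finset.sum_fn, hsum]
  field_simp

lemma integral_sq_average_pi (hn : n ≠ 0) (hφ : MemLp φ 2 ν) :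
    ∫ x : Fin n → α, (1 / (n : ℝ) * ∑ i, φ (x i)) ^ 2 ∂Measure.pi (fun _ => ν) =
      Var[φ; ν] / n + (∫ x, φ x ∂ν) ^ 2 := by
  have h := variance_eq_sub (memLp_average_pi (n := n) hφ)
  rw [variance_average_pi hn hφ, integral_average_pi hn (hφ.integrable one_le_two)] at h
  rw [h, sub_add_cancel]
  rfl

lemma integral_abs_average_pi_le (hn : n ≠ 0) (hφ : MemLp φ 2 ν) :
    ∫ x : Fin n → α, |1 / (n : ℝ) * ∑ i, φ (x i)| ∂Measure.pi (fun _ => ν) ≤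
      √(Var[φ; ν] / n) + |∫ x, φ x ∂ν| := by
  set Y : (Fin n → α) → ℝ := fun x => 1 / (n : ℝ) * ∑ i, φ (x i)
  have hjensen : (∫ x, |Y x| ∂Measure.pi fun _ => ν) ^ 2 ≤ ∫ x, Y x ^ 2 ∂Measure.pi fun _ => ν := by
    have h := variance_nonneg (fun x => |Y x|) (Measure.pi fun _ => ν)
    have hY : MemLp (fun x => |Y x|) 2 (Measure.pi fun _ => ν) := (memLp_average_pi hφ).abs
    rw [variance_eq_sub hY, sub_nonneg] at h
    simpa only [Pi.pow_apply, sq_abs] using h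
  rw [integral_sq_average_pi hn hφ] at hjensen
  have hsqrt := Real.sq_sqrt (div_nonneg (variance_nonneg φ ν) n.cast_nonneg)
  have hcross : 0 ≤ √(Var[φ; ν] / n) * |∫ x, φ x ∂ν| := by positivity
  refine (abs_le_of_sq_le_sq' ?_ (by positivity)).2
  linarith [add_sq √(Var[φ; ν] / n) |∫ x, φ x ∂ν|, sq_abs (∫ x, φ x ∂ν)]

end ProductMeasures

section BoundedTilts

lemma abs_exp_sub_sum_le (z : ℝ) (N : ℕ) :
    |exp z - ∑ m ∈ Finset.range N, z ^ m / m.factorial| ≤ |z| ^ N * exp |z| := by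
  have h := Complex.norm_exp_sub_sum_le_norm_mul_exp z N
  rw [Complex.norm_real, norm_eq_abs] at h
  exact_mod_cast h

lemma integral_tilted_eq_div {α : Type*} [MeasurableSpace α] (ν : Measure α) (H f : α → ℝ) :
    ∫ y, f y ∂ν.tilted H = (∫ y, f y * exp (H y) ∂ν) / ∫ y, exp (H y) ∂ν := by
  rw [integral_tilted, ← integral_div]
  congr with y
  rw [smul_eq_mul, div_mul_eq_mul_div, mul_comm]

variable {α : Type*} [MeasurableSpace α] {μ : Measure α} [IsProbabilityMeasure μ] {φ F : α → ℝ}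

lemma abs_integral_mul_exp_le {B D : ℝ} {N : ℕ} (hφ : ∀ᵐ x ∂μ, |φ x| ≤ B)
    (hF : ∀ᵐ x ∂μ, |F x| ≤ D) (hexp : Integrable (fun x => φ x * exp (F x)) μ)
    (hsum : Integrable (fun x => φ x * ∑ m ∈ Finset.range N, F x ^ m / m.factorial) μ) :
    |∫ x, φ x * exp (F x) ∂μ| ≤
      |∫ x, φ x * ∑ m ∈ Finset.range N, F x ^ m / m.factorial ∂μ| + B * (D ^ N * exp D) := by
  have hbound : ∀ᵐ x ∂μ, ‖φ x * exp (F x) - φ x * ∑ m ∈ Finset.range N, F x ^ m / m.factorial‖ ≤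
      B * (D ^ N * exp D) := by
    filter_upwards [hφ, hF] with x hφx hFx
    rw [← mul_sub, norm_mul]
    have hD : 0 ≤ D := (abs_nonneg _).trans hFx
    have hrem : |F x| ^ N * exp |F x| ≤ D ^ N * exp D := by gcongr
    exact mul_le_mul hφx ((abs_exp_sub_sum_le _ _).trans hrem) (norm_nonneg _)
      ((abs_nonneg _).trans hφx)
  have hdiff := norm_integral_le_of_norm_le_const hbound
  rw [integral_sub hexp hsum, probReal_univ, mul_one, norm_eq_abs] at hdiff
  linarith [abs_sub_abs_le_abs_sub (∫ x, φ x * exp (F x) ∂μ)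
    (∫ x, φ x * ∑ m ∈ Finset.range N, F x ^ m / m.factorial ∂μ)]

lemma abs_integral_mul_exp_le_of_integral_eq_zero {B D : ℝ} (hφ : ∀ᵐ x ∂μ, |φ x| ≤ B)
    (hF : ∀ᵐ x ∂μ, |F x| ≤ D) (hexp : Integrable (fun x => φ x * exp (F x)) μ)
    (hint : Integrable φ μ) (hφF : Integrable (fun x => φ x * F x) μ) (hφ0 : ∫ x, φ x ∂μ = 0) :
    |∫ x, φ x * exp (F x) ∂μ| ≤ |∫ x, φ x * F x ∂μ| + B * (D ^ 2 * exp D) := by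
  have hexpand : ∀ x, φ x * ∑ m ∈ Finset.range 2, F x ^ m / m.factorial = φ x + φ x * F x :=
    fun x => by simp [Finset.sum_range_succ, mul_add]
  have h := abs_integral_mul_exp_le (N := 2) hφ hF hexp
    ((hint.add hφF).congr (.of_forall fun x => (hexpand x).symm))
  rwa [integral_congr_ae (.of_forall hexpand), integral_add hint hφF, hφ0, zero_add] at h

lemma one_le_integral_exp (hF : Integrable F μ) (hexp : Integrable (fun x => exp (F x)) μ)
    (hF0 : 0 ≤ ∫ x, F x ∂μ) : 1 ≤ ∫ x, exp (F x) ∂μ := by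
  have h : ∫ x, F x + 1 ∂μ ≤ ∫ x, exp (F x) ∂μ :=
    integral_mono (hF.add (integrable_const 1)) hexp fun x => add_one_le_exp (F x)
  rw [integral_add hF (integrable_const 1), integral_const, probReal_univ, one_smul] at h
  linarith

lemma abs_integral_tilted_le (hF : Integrable F μ) (hexp : Integrable (fun x => exp (F x)) μ)
    (hF0 : 0 ≤ ∫ x, F x ∂μ) : |∫ x, φ x ∂μ.tilted F| ≤ |∫ x, φ x * exp (F x) ∂μ| := by
  have hZ := one_le_integral_exp hF hexp hF0
  rw [integral_tilted_eq_div, abs_div, abs_of_pos (one_pos.trans_le hZ)]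
  exact div_le_self (abs_nonneg _) hZ

variable {ρ : Measure ℝ} [IsProbabilityMeasure ρ] {L : ℝ} {ψ : ℝ → ℝ}

lemma exists_ae_abs_le_of_continuous (hρ : ∀ᵐ x ∂ρ, |x| ≤ L) (hψ : Continuous ψ) :
    ∃ B, 0 ≤ B ∧ ∀ᵐ x ∂ρ, |ψ x| ≤ B := by
  obtain ⟨B, hB⟩ := isCompact_Icc.exists_bound_of_continuousOn (s := Icc (-L) L) hψ.continuousOn
  have hae : ∀ᵐ x ∂ρ, |ψ x| ≤ B := hρ.mono fun x hx => hB x (abs_le.1 hx)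
  obtain ⟨x, hx⟩ := hae.exists
  exact ⟨B, (abs_nonneg _).trans hx, hae⟩

lemma exists_abs_integral_tilted_linear_le (hρ : ∀ᵐ x ∂ρ, |x| ≤ L) (hmean : ∫ x, x ∂ρ = 0)
    (hψ : Continuous ψ) (hψ0 : ∫ x, ψ x ∂ρ = 0) (T : ℝ) :
    ∃ C, 0 ≤ C ∧ ∀ t, |t| ≤ T → |∫ x, ψ x ∂ρ.tilted (t * ·)| ≤ C * |t| := by
  obtain ⟨B, hB, hψB⟩ := exists_ae_abs_le_of_continuous hρ hψ
  obtain ⟨y, hy⟩ := hρ.exists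
  have hL : 0 ≤ L := (abs_nonneg y).trans hy
  have hint : ∀ {f : ℝ → ℝ}, Continuous f → Integrable f ρ :=
    integrable_of_continuous_of_ae_abs_le hρ
  refine ⟨B * L * exp (T * L), by positivity, fun t ht => ?_⟩
  have hF : ∀ᵐ x ∂ρ, |t * x| ≤ |t| * L := by
    filter_upwards [hρ] with x hx
    rw [abs_mul]
    gcongr
  have htilt := abs_integral_tilted_le (φ := ψ) (hint (continuous_const_mul t))
    (hint (by fun_prop)) (by rw [integral_const_mul, hmean, mul_zero])
  have htaylor := abs_integral_mul_exp_le (N := 1) hψB hF (hint (by fun_prop)) (hint (by fun_prop))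
  simp only [Finset.sum_range_one, pow_zero, Nat.factorial_zero, Nat.cast_one, div_one, mul_one,
    hψ0, abs_zero, zero_add, pow_one] at htaylor
  calc |∫ x, ψ x ∂ρ.tilted (t * ·)| ≤ B * (|t| * L * exp (|t| * L)) := htilt.trans htaylor
    _ ≤ B * (|t| * L * exp (T * L)) := by gcongr
    _ = B * L * exp (T * L) * |t| := by ring

lemma exists_abs_integral_tilted_quadratic_le (hρ : ∀ᵐ x ∂ρ, |x| ≤ L) (hmean : ∫ x, x ∂ρ = 0)
    (hψ : Continuous ψ) (hψ0 : ∫ x, ψ x ∂ρ = 0) (hψ1 : ∫ x, ψ x * x ∂ρ = 0) (T : ℝ) :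
    ∃ C, 0 ≤ C ∧ ∀ q t, 0 ≤ q → q ≤ 1 → |t| ≤ T →
      |∫ x, ψ x ∂ρ.tilted fun x => q * x ^ 2 + t * x| ≤ C * (q + t ^ 2) := by
  obtain ⟨B, hB, hψB⟩ := exists_ae_abs_le_of_continuous hρ hψ
  obtain ⟨y, hy⟩ := hρ.exists
  have hL : 0 ≤ L := (abs_nonneg y).trans hy
  have hint : ∀ {f : ℝ → ℝ}, Continuous f → Integrable f ρ :=
    integrable_of_continuous_of_ae_abs_le hρ
  set A := |∫ x, ψ x * x ^ 2 ∂ρ|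
  set E := exp (L ^ 2 + T * L)
  refine ⟨A + 2 * B * (L ^ 4 + L ^ 2) * E, by positivity, fun q t hq hq1 ht => ?_⟩
  have hF : ∀ᵐ x ∂ρ, |q * x ^ 2 + t * x| ≤ q * L ^ 2 + |t| * L := by
    filter_upwards [hρ] with x hx
    refine (abs_add_le _ _).trans ?_
    rw [abs_mul, abs_mul, abs_of_nonneg hq, abs_pow]
    gcongr
  have hF0 : 0 ≤ ∫ x, q * x ^ 2 + t * x ∂ρ := by
    rw [integral_add (hint (by fun_prop)) (hint (by fun_prop)), integral_const_mul,
      integral_const_mul, hmean, mul_zero, add_zero]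
    positivity
  have htilt := abs_integral_tilted_le (φ := ψ) (hint (by fun_prop)) (hint (by fun_prop)) hF0
  have htaylor := abs_integral_mul_exp_le_of_integral_eq_zero hψB hF (hint (by fun_prop))
    (hint hψ) (hint (by fun_prop)) hψ0
  have hmain : ∫ x, ψ x * (q * x ^ 2 + t * x) ∂ρ = q * ∫ x, ψ x * x ^ 2 ∂ρ := by
    simp only [mul_add, mul_left_comm (ψ _)]
    rw [integral_add (hint (by fun_prop)) (hint (by fun_prop)), integral_const_mul,
      integral_const_mul, hψ1, mul_zero, add_zero]
  rw [hmain, abs_mul, abs_of_nonneg hq] at htaylor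
  have hsq : (q * L ^ 2 + |t| * L) ^ 2 ≤ 2 * (L ^ 4 + L ^ 2) * (q + t ^ 2) := by
    have hqq : q ^ 2 ≤ q := by nlinarith
    calc (q * L ^ 2 + |t| * L) ^ 2 ≤ 2 * ((q * L ^ 2) ^ 2 + (|t| * L) ^ 2) := add_sq_le
      _ = 2 * (L ^ 4 * q ^ 2 + L ^ 2 * t ^ 2) := by rw [mul_pow |t|, sq_abs]; ring
      _ ≤ 2 * ((L ^ 4 + L ^ 2) * q + (L ^ 4 + L ^ 2) * t ^ 2) := by
        gcongr <;> simp only [le_add_iff_nonneg_left, le_add_iff_nonneg_right] <;> positivity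
      _ = 2 * (L ^ 4 + L ^ 2) * (q + t ^ 2) := by ring
  calc _ ≤ q * A + B * ((q * L ^ 2 + |t| * L) ^ 2 * exp (q * L ^ 2 + |t| * L)) :=
        htilt.trans htaylor
    _ ≤ (q + t ^ 2) * A + B * (2 * (L ^ 4 + L ^ 2) * (q + t ^ 2) * exp (1 * L ^ 2 + T * L)) := by
        gcongr
        exact le_add_of_nonneg_right (sq_nonneg t)
    _ = (A + 2 * B * (L ^ 4 + L ^ 2) * E) * (q + t ^ 2) := by rw [one_mul]; ring

end BoundedTilts

section TangentLine

variable {s : Set ℝ} {f f' f'' : ℝ → ℝ} {u v c C : ℝ}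

lemma add_mul_sub_le_of_hasDerivAt_of_nonneg (hs : Convex ℝ s) (hf : ∀ x, HasDerivAt f (f' x) x)
    (hf' : ∀ x, HasDerivAt f' (f'' x) x) (hf'' : ∀ x ∈ s, 0 ≤ f'' x) (hu : u ∈ s) (hv : v ∈ s) :
    f v + f' v * (u - v) ≤ f u := by
  have hconv : ConvexOn ℝ s f :=
    convexOn_of_hasDerivWithinAt2_nonneg hs (fun x _ => (hf x).continuousAt.continuousWithinAt)
      (fun x _ => (hf x).hasDerivWithinAt) (fun x _ => (hf' x).hasDerivWithinAt)
      fun x hx => hf'' x (interior_subset hx)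
  rcases lt_trichotomy u v with huv | rfl | huv
  · have hslope := hconv.slope_le_of_hasDerivAt hu hv huv (hf v)
    rw [slope_def_field, div_le_iff₀ (sub_pos.2 huv)] at hslope
    linarith
  · simp
  · have hslope := hconv.le_slope_of_hasDerivAt hv hu huv (hf v)
    rw [slope_def_field, le_div_iff₀ (sub_pos.2 huv)] at hslope
    linarith

lemma half_mul_sq_le_sub_of_hasDerivAt (hs : Convex ℝ s) (hf : ∀ x, HasDerivAt f (f' x) x)
    (hf' : ∀ x, HasDerivAt f' (f'' x) x) (hf'' : ∀ x ∈ s, c ≤ f'' x) (hu : u ∈ s) (hv : v ∈ s) :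
    c / 2 * (u - v) ^ 2 ≤ f u - (f v + f' v * (u - v)) := by
  have htangent := add_mul_sub_le_of_hasDerivAt_of_nonneg (f := fun x => f x - c / 2 * x ^ 2)
    (f' := fun x => f' x - c * x) (f'' := fun x => f'' x - c) hs
    (fun x => ((hf x).sub ((hasDerivAt_pow 2 x).const_mul (c / 2))).congr_deriv
      (by simp only [Nat.cast_ofNat, Nat.add_one_sub_one, pow_one]; ring))
    (fun x => ((hf' x).sub ((hasDerivAt_id x).const_mul c)).congr_deriv (by simp))
    (fun x hx => sub_nonneg.2 (hf'' x hx)) hu hv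
  linarith

lemma sub_le_half_mul_sq_of_hasDerivAt (hs : Convex ℝ s) (hf : ∀ x, HasDerivAt f (f' x) x)
    (hf' : ∀ x, HasDerivAt f' (f'' x) x) (hf'' : ∀ x ∈ s, f'' x ≤ C) (hu : u ∈ s) (hv : v ∈ s) :
    f u - (f v + f' v * (u - v)) ≤ C / 2 * (u - v) ^ 2 := by
  have hneg := half_mul_sq_le_sub_of_hasDerivAt (c := -C) hs (fun x => (hf x).neg)
    (fun x => (hf' x).neg) (fun x hx => neg_le_neg (hf'' x hx)) hu hv
  simp only [Pi.neg_apply] at hneg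
  linarith

end TangentLine

section TruncatedPowers

/-- The difference `(u⁺)ʲ - ((u - σ)⁺)ʲ`. With `σ = s` and `j = 2k` it is, up to the factor
`h^{(2k)}(0) / (2k)!`, the exponent of `ζ(·, s)`. -/
noncomputable def truncPowSub (σ : ℝ) (j : ℕ) (u : ℝ) : ℝ :=
  max u 0 ^ j - max (u - σ) 0 ^ j

variable {σ θ u L : ℝ} {j : ℕ}

@[fun_prop]
lemma continuous_truncPowSub (σ : ℝ) (j : ℕ) : Continuous (truncPowSub σ j) := by
  unfold truncPowSub; fun_prop

lemma truncPowSub_nonneg (hσ : 0 ≤ σ) (j : ℕ) (u : ℝ) : 0 ≤ truncPowSub σ j u :=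
  sub_nonneg.2 <| pow_le_pow_left₀ (le_max_right _ _)
    (max_le_max (sub_le_self u hσ) le_rfl) j

lemma truncPowSub_le_abs_pow (σ : ℝ) (j : ℕ) (u : ℝ) : truncPowSub σ j u ≤ |u| ^ j :=
  (sub_le_self _ (pow_nonneg (le_max_right _ _) j)).trans <|
    pow_le_pow_left₀ (le_max_right _ _) (max_le (le_abs_self u) (abs_nonneg u)) j

lemma truncPowSub_of_nonpos (hσ : 0 ≤ σ) (hu : u ≤ 0) (j : ℕ) : truncPowSub σ j u = 0 := by
  rw [truncPowSub, max_eq_right hu, max_eq_right (by linarith), sub_self]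

lemma truncPowSub_mul {r : ℝ} (hr : 0 ≤ r) (s : ℝ) (j : ℕ) (w : ℝ) :
    truncPowSub (s * r) j (r * w) = r ^ j * truncPowSub s j w := by
  have hmax (y : ℝ) : max (r * y) 0 = r * max y 0 := by rw [mul_max_of_nonneg _ _ hr, mul_zero]
  rw [truncPowSub, truncPowSub, show r * w - s * r = r * (w - s) by ring, hmax, hmax,
    mul_pow, mul_pow, mul_sub]

lemma truncPowSub_le_mul_pow (hu : 0 < u) (hσu : σ ≤ θ * u) (hθ : θ ≤ 1) (j : ℕ) :
    truncPowSub σ j u ≤ j * θ * u ^ j := by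
  have hσ : σ ≤ u := hσu.trans (mul_le_of_le_one_left hu.le hθ)
  have hbernoulli : 1 + (j : ℝ) * -θ ≤ (1 + -θ) ^ j := one_add_mul_le_pow (by linarith) j
  have hpow : (u * (1 + -θ)) ^ j ≤ (u - σ) ^ j :=
    pow_le_pow_left₀ (mul_nonneg hu.le (by linarith)) (by linarith) j
  have := mul_le_mul_of_nonneg_left hbernoulli (pow_nonneg hu.le j)
  rw [truncPowSub, max_eq_left hu.le, max_eq_left (sub_nonneg.2 hσ)]
  rw [mul_pow] at hpow
  linarith

lemma hasDerivAt_max_zero_pow (j : ℕ) (hj : j ≠ 0) (x : ℝ) :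
    HasDerivAt (fun x : ℝ => max x 0 ^ (j + 1)) ((j + 1) * max x 0 ^ j) x := by
  have hoff (y : ℝ) (hy : y ≠ 0) :
      HasDerivAt (fun x : ℝ => max x 0 ^ (j + 1)) ((j + 1) * max y 0 ^ j) y := by
    rcases hy.lt_or_gt with hy | hy
    · rw [max_eq_right hy.le, zero_pow hj, mul_zero]
      refine (hasDerivAt_const y (0 : ℝ)).congr_of_eventuallyEq ?_
      filter_upwards [Iio_mem_nhds hy] with z hz
      rw [max_eq_right (le_of_lt hz), zero_pow j.succ_ne_zero]
    · rw [max_eq_left hy.le]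
      refine ((hasDerivAt_pow (j + 1) y).congr_of_eventuallyEq ?_).congr_deriv (by simp)
      filter_upwards [Ioi_mem_nhds hy] with z hz
      rw [max_eq_left (le_of_lt hz)]
  rcases eq_or_ne x 0 with rfl | hx
  · exact hasDerivAt_of_hasDerivAt_of_ne' hoff (by fun_prop) (by fun_prop) 0
  · exact hoff x hx

lemma hasDerivAt_truncPowSub (σ : ℝ) (hj : j ≠ 0) (x : ℝ) :
    HasDerivAt (truncPowSub σ (j + 1)) ((j + 1) * truncPowSub σ j x) x :=
  ((hasDerivAt_max_zero_pow j hj x).sub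
    ((hasDerivAt_max_zero_pow j hj (x - σ)).comp_sub_const x σ)).congr_deriv (mul_sub _ _ _).symm

end TruncatedPowers

section Exponent

/-- The exponent `φ(u) = u² / 2 + a ((u⁺)ᵐ - ((u - σ)⁺)ᵐ)` for which
`ζ(W, s) e^{S² / 2n} = e^{n φ(S / n)}`, when `a = h^{(2k)}(0) / (2k)!`, `m = 2k` and
`σ = s n^{-1/(2k)}`. -/
noncomputable def tiltExponent (a σ : ℝ) (m : ℕ) (u : ℝ) : ℝ :=
  u ^ 2 / 2 + a * truncPowSub σ m u

/-- The derivative of `tiltExponent a σ m`, for `m ≥ 2`. -/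
noncomputable def tiltSlope (a σ : ℝ) (m : ℕ) (u : ℝ) : ℝ :=
  u + a * (m * truncPowSub σ (m - 1) u)

variable {a σ L u v : ℝ} {j m : ℕ}

@[fun_prop]
lemma continuous_tiltExponent (a σ : ℝ) (m : ℕ) : Continuous (tiltExponent a σ m) := by
  unfold tiltExponent; fun_prop

@[fun_prop]
lemma continuous_tiltSlope (a σ : ℝ) (m : ℕ) : Continuous (tiltSlope a σ m) := by
  unfold tiltSlope; fun_prop

lemma hasDerivAt_tiltExponent (a σ : ℝ) (hm : 2 ≤ m) (x : ℝ) :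
    HasDerivAt (tiltExponent a σ m) (tiltSlope a σ m x) x := by
  obtain ⟨j, rfl⟩ := Nat.exists_eq_add_of_le' hm
  refine (((hasDerivAt_pow 2 x).div_const 2).add
    ((hasDerivAt_truncPowSub σ (j := j + 1) j.succ_ne_zero x).const_mul a)).congr_deriv ?_
  simp only [tiltSlope, Nat.add_one_sub_one]
  push_cast
  ring

lemma hasDerivAt_tiltSlope (a σ : ℝ) (hm : 3 ≤ m) (x : ℝ) :
    HasDerivAt (tiltSlope a σ m) (1 + a * (m * (m - 1 : ℕ) * truncPowSub σ (m - 2) x)) x := by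
  obtain ⟨j, rfl⟩ := Nat.exists_eq_add_of_le' hm
  refine ((hasDerivAt_id x).add (((hasDerivAt_truncPowSub σ (j := j + 1) j.succ_ne_zero x).const_mul
    ((j + 3 : ℕ) : ℝ)).const_mul a)).congr_deriv ?_
  push_cast
  ring

lemma tiltExponent_sub_tangent_mem_Icc (ha : 0 ≤ a) (hσ : 0 ≤ σ) (hm : 3 ≤ m) (hu : |u| ≤ L)
    (hv : |v| ≤ L) :
    tiltExponent a σ m u - (tiltExponent a σ m v + tiltSlope a σ m v * (u - v)) ∈
      Icc (1 / 2 * (u - v) ^ 2) ((1 + a * (m * (m - 1 : ℕ) * L ^ (m - 2))) / 2 * (u - v) ^ 2) := by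
  have hφ := hasDerivAt_tiltExponent a σ (by omega : 2 ≤ m)
  have hφ' := hasDerivAt_tiltSlope a σ hm
  refine ⟨half_mul_sq_le_sub_of_hasDerivAt (convex_Icc (-L) L) hφ hφ' (fun x _ => ?_)
      (abs_le.1 hu) (abs_le.1 hv),
    sub_le_half_mul_sq_of_hasDerivAt (convex_Icc (-L) L) hφ hφ' (fun x hx => ?_)
      (abs_le.1 hu) (abs_le.1 hv)⟩
  · have := truncPowSub_nonneg hσ (m - 2) x
    exact le_add_of_nonneg_right (by positivity)
  · gcongr
    exact (truncPowSub_le_abs_pow σ (m - 2) x).trans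
      (pow_le_pow_left₀ (abs_nonneg x) (abs_le.2 hx) _)

end Exponent

section TangentKernel

variable {φ φ' : ℝ → ℝ} {a b c p q u K L N : ℝ}

lemma sub_mul_le_setIntegral_Icc {f : ℝ → ℝ} (hf : Continuous f) (hf0 : ∀ v, 0 ≤ f v)
    (hpq : p ≤ q) (hsub : Icc p q ⊆ Icc a b) (hc : ∀ v ∈ Icc p q, c ≤ f v) :
    (q - p) * c ≤ ∫ v in Icc a b, f v :=
  calc (q - p) * c = ∫ _ in Icc p q, c := by simp [Measure.real, hpq]
    _ ≤ ∫ v in Icc p q, f v :=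
      setIntegral_mono_on continuous_const.integrableOn_Icc hf.integrableOn_Icc measurableSet_Icc hc
    _ ≤ ∫ v in Icc a b, f v :=
      setIntegral_mono_set hf.integrableOn_Icc (.of_forall hf0) (.of_forall hsub)

lemma exists_Icc_subset_forall_abs_sub_le {d : ℝ} (hd0 : 0 ≤ d) (hd : d ≤ L) (hu : |u| ≤ L) :
    ∃ p, Icc p (p + d) ⊆ Icc (-L) L ∧ ∀ v ∈ Icc p (p + d), |u - v| ≤ d := by
  obtain ⟨hlo, hhi⟩ := abs_le.1 hu
  rcases le_total u 0 with hu0 | hu0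
  · exact ⟨u, Icc_subset_Icc hlo (by linarith), fun v hv =>
      abs_le.2 ⟨by linarith [hv.2], by linarith [hv.1]⟩⟩
  · exact ⟨u - d, Icc_subset_Icc (by linarith) (by linarith), fun v hv =>
      abs_le.2 ⟨by linarith [hv.2], by linarith [hv.1]⟩⟩

lemma exp_le_sqrt_mul_setIntegral_tangentKernel (hφ : Continuous φ) (hφ' : Continuous φ')
    (hupper : ∀ u v, |u| ≤ L → |v| ≤ L → φ u - (φ v + φ' v * (u - v)) ≤ K * (u - v) ^ 2)
    (hK : 0 ≤ K) (hL : 1 ≤ L) (hN : 1 ≤ N) (hu : |u| ≤ L) :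
    exp (N * φ u) ≤ exp K * (√N * ∫ v in Icc (-L) L, exp (N * (φ v + φ' v * (u - v)))) := by
  have hN0 : 0 < N := one_pos.trans_le hN
  have hsqrt : 1 ≤ √N := one_le_sqrt.2 hN
  obtain ⟨p, hsub, hnear⟩ := exists_Icc_subset_forall_abs_sub_le (d := (√N)⁻¹) (by positivity)
    ((inv_le_one_of_one_le₀ hsqrt).trans hL) hu
  have hbound := sub_mul_le_setIntegral_Icc (q := p + (√N)⁻¹) (c := exp (N * φ u - K))
    (f := fun v => exp (N * (φ v + φ' v * (u - v)))) (by fun_prop) (fun v => (exp_pos _).le)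
    (by simp) hsub fun v hv => by
      have hsq : (u - v) ^ 2 ≤ N⁻¹ := by
        simpa [inv_pow, sq_sqrt hN0.le] using sq_le_sq' (abs_le.1 (hnear v hv)).1
          (abs_le.1 (hnear v hv)).2
      have hφu := (hupper u v hu (abs_le.2 (hsub hv))).trans (mul_le_mul_of_nonneg_left hsq hK)
      have hscaled := mul_le_mul_of_nonneg_left hφu hN0.le
      rw [mul_left_comm, mul_inv_cancel₀ hN0.ne', mul_one] at hscaled
      exact exp_le_exp.2 (by linarith)
  rw [add_sub_cancel_left, inv_mul_le_iff₀ (by positivity), exp_sub,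
    div_le_iff₀ (exp_pos K)] at hbound
  linarith

lemma sqrt_mul_setIntegral_tangentKernel_le (hφ : Continuous φ) (hφ' : Continuous φ')
    (hlower : ∀ u v, |u| ≤ L → |v| ≤ L → 1 / 2 * (u - v) ^ 2 ≤ φ u - (φ v + φ' v * (u - v)))
    (hN : 0 < N) (hu : |u| ≤ L) :
    √N * ∫ v in Icc (-L) L, exp (N * (φ v + φ' v * (u - v))) ≤ √(2 * π) * exp (N * φ u) := by
  have hgauss : Integrable fun v : ℝ => exp (-(N / 2) * (u - v) ^ 2) :=
    (integrable_exp_neg_mul_sq (half_pos hN)).comp_sub_left u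
  have hpointwise (v : ℝ) (hv : v ∈ Icc (-L) L) : exp (N * (φ v + φ' v * (u - v))) ≤
      exp (N * φ u) * exp (-(N / 2) * (u - v) ^ 2) := by
    have := mul_le_mul_of_nonneg_left (hlower u v hu (abs_le.2 hv)) hN.le
    rw [← exp_add]
    exact exp_le_exp.2 (by linarith)
  calc √N * ∫ v in Icc (-L) L, exp (N * (φ v + φ' v * (u - v)))
      ≤ √N * ∫ v in Icc (-L) L, exp (N * φ u) * exp (-(N / 2) * (u - v) ^ 2) := by
        refine mul_le_mul_of_nonneg_left ?_ (sqrt_nonneg N)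
        exact setIntegral_mono_on (by fun_prop : Continuous _).integrableOn_Icc
          (hgauss.integrableOn.const_mul _) measurableSet_Icc hpointwise
    _ ≤ √N * (exp (N * φ u) * ∫ v, exp (-(N / 2) * (u - v) ^ 2)) := by
        rw [integral_const_mul]
        refine mul_le_mul_of_nonneg_left (mul_le_mul_of_nonneg_left ?_ (exp_pos _).le)
          (sqrt_nonneg N)
        exact setIntegral_le_integral hgauss (Eventually.of_forall fun v => (exp_pos _).le)
    _ = √(2 * π) * exp (N * φ u) := by
        rw [integral_sub_left_eq_self (fun v : ℝ => exp (-(N / 2) * v ^ 2)) volume u,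
          integral_gaussian, mul_left_comm, ← sqrt_mul hN.le, mul_comm]
        congr 2
        field_simp

end TangentKernel

section LaplaceRate

/-- The rate `Ψ(v) = φ(v) - v φ'(v) + φ'(v)² / 2 - h(φ'(v))`: for `h = hfun ρ` the tangent kernel
`e^{n (φ(v) + φ'(v) (S / n - v))}` has mass `e^{n Ψ(v)}` under the `n`-fold product of `ρ`. -/
noncomputable def laplaceRate (h φ φ' : ℝ → ℝ) (v : ℝ) : ℝ :=
  φ v - v * φ' v + φ' v ^ 2 / 2 - h (φ' v)

variable {h : ℝ → ℝ} {a b c C L N r σ θ v : ℝ} {m : ℕ}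

lemma continuous_laplaceRate {φ φ' : ℝ → ℝ} (hh : Continuous h) (hφ : Continuous φ)
    (hφ' : Continuous φ') : Continuous (laplaceRate h φ φ') := by
  unfold laplaceRate; fun_prop

lemma laplaceRate_tiltExponent (h : ℝ → ℝ) (a σ : ℝ) (m : ℕ) (v : ℝ) :
    laplaceRate h (tiltExponent a σ m) (tiltSlope a σ m) v =
      a * truncPowSub σ m v + (a * (m * truncPowSub σ (m - 1) v)) ^ 2 / 2 -
        h (tiltSlope a σ m v) := by
  unfold laplaceRate tiltExponent tiltSlope; ring

lemma laplaceRate_tiltExponent_of_nonpos (h : ℝ → ℝ) (a : ℝ) (hσ : 0 ≤ σ) (m : ℕ) (hv : v ≤ 0) :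
    laplaceRate h (tiltExponent a σ m) (tiltSlope a σ m) v = -h v := by
  simp [laplaceRate_tiltExponent, tiltSlope, truncPowSub_of_nonpos hσ hv]

lemma abs_tiltSlope_le (ha : 0 ≤ a) (hσ : 0 ≤ σ) (hm : 2 ≤ m) (hv : |v| ≤ L) :
    |tiltSlope a σ m v| ≤ (1 + a * m * L ^ (m - 2)) * |v| := by
  have hdiff : truncPowSub σ (m - 1) v ≤ L ^ (m - 2) * |v| := by
    refine (truncPowSub_le_abs_pow σ (m - 1) v).trans ?_
    rw [show m - 1 = m - 2 + 1 by omega, pow_succ]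
    gcongr
  have hnonneg := truncPowSub_nonneg hσ (m - 1) v
  calc |tiltSlope a σ m v| ≤ |v| + |a * (m * truncPowSub σ (m - 1) v)| := abs_add_le _ _
    _ = |v| + a * (m * truncPowSub σ (m - 1) v) := by
        rw [abs_of_nonneg (a := a * (m * truncPowSub σ (m - 1) v)) (by positivity)]
    _ ≤ |v| + a * (m * (L ^ (m - 2) * |v|)) := by gcongr
    _ = (1 + a * m * L ^ (m - 2)) * |v| := by ring

lemma sq_mul_truncPowSub_le (ha : 0 ≤ a) (hσ : 0 ≤ σ) (hm : 2 ≤ m) (hv0 : 0 < v) (hv : v ≤ L)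
    (hσv : σ ≤ θ * v) (hθ0 : 0 ≤ θ) (hθ : θ ≤ 1) :
    (a * (m * truncPowSub σ (m - 1) v)) ^ 2 ≤ θ * (a ^ 2 * m ^ 4 * L ^ (m - 2)) * v ^ m := by
  have hnonneg := truncPowSub_nonneg hσ (m - 1) v
  have hdiff : truncPowSub σ (m - 1) v ≤ m * θ * v ^ (m - 1) :=
    (truncPowSub_le_mul_pow hv0 hσv hθ (m - 1)).trans <| by
      gcongr
      exact Nat.sub_le m 1
  have hpow : (v ^ (m - 1)) ^ 2 = v ^ (m - 2) * v ^ m := by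
    rw [← pow_mul, ← pow_add]; congr 1; omega
  calc (a * (m * truncPowSub σ (m - 1) v)) ^ 2
      ≤ (a * (m * (m * θ * v ^ (m - 1)))) ^ 2 := by gcongr
    _ = θ * θ * (a ^ 2 * m ^ 4 * (v ^ (m - 2) * v ^ m)) := by rw [← hpow]; ring
    _ ≤ θ * 1 * (a ^ 2 * m ^ 4 * (L ^ (m - 2) * v ^ m)) := by gcongr
    _ = θ * (a ^ 2 * m ^ 4 * L ^ (m - 2)) * v ^ m := by ring

-- The bound can fail for `0 < v < σ / θ`, where the truncated difference is of order `v ^ m`.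
lemma laplaceRate_tiltExponent_le (ha : 0 ≤ a) (hσ : 0 ≤ σ) (hm : 2 ≤ m) (hc : 0 ≤ c)
    (heven : Even m) (hh : ∀ t, |t| ≤ (1 + a * m * L ^ (m - 2)) * L → c * t ^ m ≤ h t)
    (hθ0 : 0 ≤ θ) (hθ : θ ≤ 1) (hθc : θ * (a * m + a ^ 2 * m ^ 4 * L ^ (m - 2)) ≤ c / 2)
    (hv : |v| ≤ L) (hfar : 0 < v → σ ≤ θ * v) :
    laplaceRate h (tiltExponent a σ m) (tiltSlope a σ m) v ≤ -(c / 2 * v ^ m) := by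
  have hL : 0 ≤ L := (abs_nonneg v).trans hv
  have hvm : 0 ≤ v ^ m := heven.pow_nonneg v
  have hslope : c * tiltSlope a σ m v ^ m ≤ h (tiltSlope a σ m v) :=
    hh _ ((abs_tiltSlope_le ha hσ hm hv).trans (by gcongr))
  rcases le_or_gt v 0 with hv0 | hv0
  · have hslope_eq : tiltSlope a σ m v = v := by simp [tiltSlope, truncPowSub_of_nonpos hσ hv0]
    rw [hslope_eq] at hslope
    rw [laplaceRate_tiltExponent_of_nonpos h a hσ m hv0]
    linarith [mul_nonneg hc hvm]
  have hlinear : a * truncPowSub σ m v ≤ a * (m * θ * v ^ m) :=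
    mul_le_mul_of_nonneg_left (truncPowSub_le_mul_pow hv0 (hfar hv0) hθ m) ha
  have hsquare := sq_mul_truncPowSub_le ha hσ hm hv0 ((le_abs_self v).trans hv) (hfar hv0) hθ0 hθ
  have hpow : c * v ^ m ≤ c * tiltSlope a σ m v ^ m := by
    have := truncPowSub_nonneg hσ (m - 1) v
    gcongr
    exact le_add_of_nonneg_right (by positivity)
  have hθv := mul_le_mul_of_nonneg_right hθc hvm
  rw [laplaceRate_tiltExponent]
  nlinarith [sq_nonneg (a * (m * truncPowSub σ (m - 1) v))]

lemma integrable_sq_mul_exp_neg_mul_pow (hb : 0 < b) (hm : 2 ≤ m) (heven : Even m) :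
    Integrable fun w : ℝ => w ^ 2 * exp (-(b * w ^ m)) := by
  have hpow (w : ℝ) : w ^ 2 - 1 ≤ w ^ m := by
    rcases le_total |w| 1 with hw | hw
    · exact (sub_nonpos.2 ((sq_le_one_iff_abs_le_one w).2 hw)).trans (heven.pow_nonneg w)
    · rw [← heven.pow_abs, ← sq_abs]
      linarith [pow_le_pow_right₀ hw hm]
  have hgauss : Integrable fun w : ℝ => exp b * (w ^ (2 : ℝ) * exp (-b * w ^ 2)) :=
    (integrable_rpow_mul_exp_neg_mul_sq hb (by norm_num)).const_mul _
  refine hgauss.mono' (by fun_prop) (Eventually.of_forall fun w => ?_)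
  rw [norm_of_nonneg (by positivity), rpow_two, mul_left_comm, ← exp_add]
  gcongr
  linarith [mul_le_mul_of_nonneg_left (hpow w) hb.le]

lemma mul_exp_neg_le_setIntegral_laplaceRate (hcont : Continuous h) (hσ : 0 ≤ σ)
    (heven : Even m) (hh : ∀ t, |t| ≤ L → h t ≤ C * t ^ m) (hC : 0 ≤ C) (hN : 0 ≤ N)
    (hr : 0 ≤ r) (hrL : r ≤ L) (hNr : N * r ^ m = 1) :
    r * exp (-C) ≤
      ∫ v in Icc (-L) L, exp (N * laplaceRate h (tiltExponent a σ m) (tiltSlope a σ m) v) := by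
  have hΨ := continuous_laplaceRate hcont (continuous_tiltExponent a σ m)
    (continuous_tiltSlope a σ m)
  have hsub : Icc (-r) 0 ⊆ Icc (-L) L := Icc_subset_Icc (neg_le_neg hrL) (hr.trans hrL)
  have hbound := sub_mul_le_setIntegral_Icc (c := exp (-C))
    (f := fun v => exp (N * laplaceRate h (tiltExponent a σ m) (tiltSlope a σ m) v))
    (by fun_prop) (fun v => (exp_pos _).le) (neg_nonpos.2 hr) hsub fun v hv => by
      have hvr : v ^ m ≤ r ^ m := by
        rw [← heven.pow_abs]
        exact pow_le_pow_left₀ (abs_nonneg v) (abs_le.2 ⟨hv.1, hv.2.trans hr⟩) m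
      have hNh : N * h v ≤ C :=
        calc N * h v ≤ N * (C * r ^ m) := by
              gcongr
              exact (hh v (abs_le.2 (hsub hv))).trans (by gcongr)
          _ = C := by rw [mul_left_comm, hNr, mul_one]
      rw [laplaceRate_tiltExponent_of_nonpos h a hσ m hv.2]
      exact exp_le_exp.2 (by linarith)
  rwa [zero_sub, neg_neg] at hbound

lemma sq_mul_exp_mul_laplaceRate_le (ha : 0 ≤ a) (hσ : 0 ≤ σ) (hm : 2 ≤ m) (hc : 0 ≤ c)
    (heven : Even m) (hh : ∀ t, |t| ≤ (1 + a * m * L ^ (m - 2)) * L → c * t ^ m ≤ h t)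
    (hθ0 : 0 < θ) (hθ : θ ≤ 1) (hθc : θ * (a * m + a ^ 2 * m ^ 4 * L ^ (m - 2)) ≤ c / 2)
    (hN : 0 ≤ N) (hr : 0 < r) (hNr : N * r ^ m = 1) (hv : |v| ≤ L) :
    v ^ 2 * exp (N * laplaceRate h (tiltExponent a σ m) (tiltSlope a σ m) v) ≤
      (σ / θ) ^ 2 * exp (N * laplaceRate h (tiltExponent a σ m) (tiltSlope a σ m) v) +
        r ^ 2 * ((v / r) ^ 2 * exp (-(c / 2 * (v / r) ^ m))) := by
  by_cases hfar : 0 < v → σ ≤ θ * v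
  · have hΨ := mul_le_mul_of_nonneg_left
      (laplaceRate_tiltExponent_le ha hσ hm hc heven hh hθ0.le hθ hθc hv hfar) hN
    have hscale : (v / r) ^ m = N * v ^ m := by
      rw [div_pow, div_eq_iff (by positivity)]
      linear_combination -v ^ m * hNr
    have hexp : exp (N * laplaceRate h (tiltExponent a σ m) (tiltSlope a σ m) v) ≤
        exp (-(c / 2 * (v / r) ^ m)) := exp_le_exp.2 (by rw [hscale]; linarith)
    refine le_add_of_nonneg_of_le (by positivity) ?_
    rw [← mul_assoc, ← mul_pow, mul_div_cancel₀ v hr.ne']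
    gcongr
  · push Not at hfar
    refine le_add_of_le_of_nonneg ?_ (by positivity)
    gcongr
    · exact hfar.1.le
    · rw [le_div_iff₀ hθ0]; linarith [hfar.2]

lemma setIntegral_sq_mul_exp_mul_laplaceRate_le (hcont : Continuous h) (ha : 0 ≤ a) (hσ : 0 ≤ σ)
    (hm : 2 ≤ m) (hc : 0 < c) (heven : Even m)
    (hh : ∀ t, |t| ≤ (1 + a * m * L ^ (m - 2)) * L → c * t ^ m ≤ h t) (hθ0 : 0 < θ) (hθ : θ ≤ 1)
    (hθc : θ * (a * m + a ^ 2 * m ^ 4 * L ^ (m - 2)) ≤ c / 2) (hN : 0 ≤ N) (hr : 0 < r)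
    (hNr : N * r ^ m = 1) :
    ∫ v in Icc (-L) L, v ^ 2 * exp (N * laplaceRate h (tiltExponent a σ m) (tiltSlope a σ m) v) ≤
      (σ / θ) ^ 2 * (∫ v in Icc (-L) L,
        exp (N * laplaceRate h (tiltExponent a σ m) (tiltSlope a σ m) v)) +
      r ^ 2 * (r * ∫ w : ℝ, w ^ 2 * exp (-(c / 2 * w ^ m))) := by
  have hΨ := continuous_laplaceRate hcont (continuous_tiltExponent a σ m)
    (continuous_tiltSlope a σ m)
  have hmain : IntegrableOn (fun v => (σ / θ) ^ 2 *
      exp (N * laplaceRate h (tiltExponent a σ m) (tiltSlope a σ m) v)) (Icc (-L) L) :=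
    (by fun_prop : Continuous _).integrableOn_Icc
  have htail : Integrable fun v : ℝ => r ^ 2 * ((v / r) ^ 2 * exp (-(c / 2 * (v / r) ^ m))) :=
    ((integrable_sq_mul_exp_neg_mul_pow (half_pos hc) hm heven).comp_div hr.ne').const_mul _
  have hscale : ∫ v : ℝ, (v / r) ^ 2 * exp (-(c / 2 * (v / r) ^ m)) =
      r * ∫ w : ℝ, w ^ 2 * exp (-(c / 2 * w ^ m)) := by
    rw [Measure.integral_comp_div (fun w : ℝ => w ^ 2 * exp (-(c / 2 * w ^ m))) r,
      abs_of_pos hr, smul_eq_mul]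
  refine (setIntegral_mono_on (by fun_prop : Continuous _).integrableOn_Icc
    (hmain.add htail.integrableOn) measurableSet_Icc fun v hv => sq_mul_exp_mul_laplaceRate_le
      ha hσ hm hc.le heven hh hθ0 hθ hθc hN hr hNr (abs_le.2 hv)).trans ?_
  simp only [Pi.add_apply]
  rw [integral_add hmain htail.integrableOn, ← hscale, ← integral_const_mul, ← integral_const_mul]
  exact add_le_add le_rfl <| setIntegral_le_integral htail <| Eventually.of_forall fun v =>
    mul_nonneg (sq_nonneg r) (mul_nonneg (sq_nonneg _) (exp_pos _).le)

lemma exists_pos_le_one_mul_le {D : ℝ} (hD : 0 ≤ D) (hc : 0 < c) :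
    ∃ θ : ℝ, 0 < θ ∧ θ ≤ 1 ∧ θ * D ≤ c := by
  refine ⟨min 1 (c / (D + 1)), by positivity, min_le_left _ _, ?_⟩
  calc min 1 (c / (D + 1)) * D ≤ c / (D + 1) * (D + 1) := by
        gcongr
        · exact min_le_right _ _
        · exact le_add_of_nonneg_right zero_le_one
    _ = c := by field_simp

lemma exists_setIntegral_sq_mul_exp_laplaceRate_le (hcont : Continuous h) (ha : 0 ≤ a)
    (hL : 1 ≤ L) (hc : 0 < c) (hC : 0 ≤ C) (hm : 2 ≤ m) (heven : Even m)
    (hh : ∀ t, |t| ≤ (1 + a * m * L ^ (m - 2)) * L → c * t ^ m ≤ h t ∧ h t ≤ C * t ^ m) :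
    ∃ M, 0 < M ∧ ∀ N r σ : ℝ, 0 ≤ N → 0 < r → r ≤ 1 → N * r ^ m = 1 → 0 ≤ σ →
      ∫ v in Icc (-L) L,
          v ^ 2 * exp (N * laplaceRate h (tiltExponent a σ m) (tiltSlope a σ m) v) ≤
        M * (r ^ 2 + σ ^ 2) * ∫ v in Icc (-L) L,
          exp (N * laplaceRate h (tiltExponent a σ m) (tiltSlope a σ m) v) := by
  obtain ⟨θ, hθ0, hθ, hθc⟩ := exists_pos_le_one_mul_le
    (by positivity : 0 ≤ a * m + a ^ 2 * m ^ 4 * L ^ (m - 2)) (half_pos hc)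
  set I := ∫ w : ℝ, w ^ 2 * exp (-(c / 2 * w ^ m))
  have hI : 0 ≤ I := integral_nonneg fun w => by positivity
  refine ⟨(θ ^ 2)⁻¹ + exp C * I, by positivity, fun N r σ hN hr hr1 hNr hσ => ?_⟩
  set J := ∫ v in Icc (-L) L,
    exp (N * laplaceRate h (tiltExponent a σ m) (tiltSlope a σ m) v)
  have : 0 ≤ J := setIntegral_nonneg measurableSet_Icc fun v _ => (exp_pos _).le
  have hlower : r ≤ exp C * J := by
    rw [mul_comm, ← div_le_iff₀ (exp_pos C), div_eq_mul_inv, ← exp_neg]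
    refine mul_exp_neg_le_setIntegral_laplaceRate hcont hσ heven
      (fun t ht => (hh t (ht.trans ?_)).2) hC hN hr.le (hr1.trans hL) hNr
    exact le_mul_of_one_le_left (by linarith) (le_add_of_nonneg_right (by positivity))
  refine (setIntegral_sq_mul_exp_mul_laplaceRate_le hcont ha hσ hm hc heven
    (fun t ht => (hh t ht).1) hθ0 hθ hθc hN hr hNr).trans ?_
  calc (σ / θ) ^ 2 * J + r ^ 2 * (r * I) ≤ (σ / θ) ^ 2 * J + r ^ 2 * (exp C * J * I) := by gcongr
    _ = ((θ ^ 2)⁻¹ * σ ^ 2 + exp C * I * r ^ 2) * J := by ring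
    _ ≤ ((θ ^ 2)⁻¹ + exp C * I) * (r ^ 2 + σ ^ 2) * J := by
        gcongr
        nlinarith [mul_nonneg (inv_nonneg.2 (sq_nonneg θ)) (sq_nonneg r),
          mul_nonneg (mul_nonneg (exp_pos C).le hI) (sq_nonneg σ)]

end LaplaceRate

section Linearization

variable {ρ : Measure ℝ} [IsProbabilityMeasure ρ] {φ φ' : ℝ → ℝ} {K L : ℝ} {n : ℕ}

lemma abs_sum_div_le {x : Fin n → ℝ} (hn : n ≠ 0) (hx : ∀ i, |x i| ≤ L) :
    |(∑ i, x i) / n| ≤ L := by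
  have hn0 : (0 : ℝ) < n := by positivity
  rw [abs_div, abs_of_pos hn0, div_le_iff₀ hn0]
  refine (Finset.abs_sum_le_sum_abs _ _).trans ((Finset.sum_le_card_nsmul _ _ L
    fun i _ => hx i).trans ?_)
  simp [mul_comm]

lemma integral_mul_exp_tangentKernel (hρ : ∀ᵐ x ∂ρ, |x| ≤ L) (hn : n ≠ 0) (φ φ' : ℝ → ℝ)
    (f : (Fin n → ℝ) → ℝ) (v : ℝ) :
    ∫ x, f x * exp (n * (φ v + φ' v * ((∑ i, x i) / n - v))) ∂Measure.pi (fun _ => ρ) =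
      exp (n * laplaceRate (hfun ρ) φ φ' v) *
        ∫ x, f x ∂Measure.pi fun _ => ρ.tilted (φ' v * ·) := by
  have hexp (x : Fin n → ℝ) : f x * exp (n * (φ v + φ' v * ((∑ i, x i) / n - v))) =
      exp (n * (φ v - v * φ' v)) * (exp (φ' v * ∑ i, x i) * f x) := by
    rw [← mul_assoc, ← exp_add, mul_comm]
    congr 2
    field_simp
    ring
  simp only [hexp]
  rw [integral_const_mul, integral_exp_mul_sum_mul ρ (φ' v) f
    (integrable_of_continuous_of_ae_abs_le hρ (by fun_prop)), mgf_id_eq_exp_sub_hfun hρ,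
    ← exp_nat_mul, ← mul_assoc, ← exp_add]
  unfold laplaceRate
  congr 2
  ring

lemma integrable_prod_of_continuous (hρ : ∀ᵐ x ∂ρ, |x| ≤ L) {F : (Fin n → ℝ) × ℝ → ℝ}
    (hF : Continuous F) :
    Integrable F ((Measure.pi fun _ => ρ).prod (volume.restrict (Icc (-L) L))) := by
  refine integrable_of_continuous_of_ae_mem_isCompact
    (K := (univ.pi fun _ => Icc (-L) L) ×ˢ Icc (-L) L)
    ((isCompact_univ_pi fun _ => isCompact_Icc).prod isCompact_Icc) ?_ hF
  filter_upwards [Measure.quasiMeasurePreserving_fst.ae (ae_pi_abs_le fun _ => hρ),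
    Measure.quasiMeasurePreserving_snd.ae (ae_restrict_mem measurableSet_Icc)] with p hx hv
  exact ⟨fun i _ => abs_le.1 (hx i), hv⟩

lemma integral_mul_setIntegral_tangentKernel (hρ : ∀ᵐ x ∂ρ, |x| ≤ L) (hn : n ≠ 0)
    (hφ : Continuous φ) (hφ' : Continuous φ') {f : (Fin n → ℝ) → ℝ} (hf : Continuous f) :
    Integrable (fun x => f x * ∫ v in Icc (-L) L,
        exp (n * (φ v + φ' v * ((∑ i, x i) / n - v)))) (Measure.pi fun _ => ρ) ∧
      ∫ x, f x * (∫ v in Icc (-L) L, exp (n * (φ v + φ' v * ((∑ i, x i) / n - v))))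
        ∂Measure.pi (fun _ => ρ) =
      ∫ v in Icc (-L) L, exp (n * laplaceRate (hfun ρ) φ φ' v) *
        ∫ x, f x ∂Measure.pi fun _ => ρ.tilted (φ' v * ·) := by
  have hint := integrable_prod_of_continuous (F := fun p => f p.1 *
    exp (n * (φ p.2 + φ' p.2 * ((∑ i, p.1 i) / n - p.2)))) hρ (by fun_prop)
  simp only [← integral_const_mul (f _), ← integral_mul_exp_tangentKernel hρ hn φ φ' f]
  exact ⟨hint.integral_prod_left, integral_integral_swap hint⟩

lemma integral_mul_exp_le_setIntegral_laplaceRate (hρ : ∀ᵐ x ∂ρ, |x| ≤ L) (hn : n ≠ 0)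
    (hφ : Continuous φ) (hφ' : Continuous φ')
    (hupper : ∀ u v, |u| ≤ L → |v| ≤ L → φ u - (φ v + φ' v * (u - v)) ≤ K * (u - v) ^ 2)
    (hK : 0 ≤ K) (hL : 1 ≤ L) {f : (Fin n → ℝ) → ℝ} (hf : Continuous f) (hf0 : ∀ x, 0 ≤ f x) :
    ∫ x, f x * exp (n * φ ((∑ i, x i) / n)) ∂Measure.pi (fun _ => ρ) ≤
      exp K * (√n * ∫ v in Icc (-L) L, exp (n * laplaceRate (hfun ρ) φ φ' v) *
        ∫ x, f x ∂Measure.pi fun _ => ρ.tilted (φ' v * ·)) := by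
  obtain ⟨hint, hswap⟩ := integral_mul_setIntegral_tangentKernel hρ hn hφ hφ' hf
  rw [← hswap, ← integral_const_mul, ← integral_const_mul]
  refine integral_mono_ae (integrable_pi_of_continuous_of_ae_abs_le (ae_pi_abs_le fun _ => hρ)
    (by fun_prop)) ((hint.const_mul _).const_mul _) ?_
  filter_upwards [ae_pi_abs_le fun _ => hρ] with x hx
  have hkernel := exp_le_sqrt_mul_setIntegral_tangentKernel hφ hφ' hupper hK hL
    (Nat.one_le_cast.2 (Nat.one_le_iff_ne_zero.2 hn)) (abs_sum_div_le hn hx)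
  linarith [mul_le_mul_of_nonneg_left hkernel (hf0 x)]

lemma setIntegral_laplaceRate_le_integral_exp (hρ : ∀ᵐ x ∂ρ, |x| ≤ L) (hn : n ≠ 0)
    (hφ : Continuous φ) (hφ' : Continuous φ')
    (hlower : ∀ u v, |u| ≤ L → |v| ≤ L → 1 / 2 * (u - v) ^ 2 ≤ φ u - (φ v + φ' v * (u - v))) :
    √n * ∫ v in Icc (-L) L, exp (n * laplaceRate (hfun ρ) φ φ' v) ≤
      √(2 * π) * ∫ x : Fin n → ℝ, exp (n * φ ((∑ i, x i) / n)) ∂Measure.pi (fun _ => ρ) := by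
  have hprob (v : ℝ) : IsProbabilityMeasure (ρ.tilted (φ' v * ·)) :=
    isProbabilityMeasure_tilted (integrable_of_continuous_of_ae_abs_le hρ (by fun_prop))
  obtain ⟨hint, hswap⟩ := integral_mul_setIntegral_tangentKernel hρ hn hφ hφ'
    (f := fun _ => 1) continuous_const
  simp only [one_mul, integral_const, probReal_univ, smul_eq_mul, mul_one] at hint hswap
  rw [← hswap, ← integral_const_mul, ← integral_const_mul]
  refine integral_mono_ae (hint.const_mul _) (integrable_pi_of_continuous_of_ae_abs_le
    (ae_pi_abs_le fun _ => hρ) (by fun_prop)) ?_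
  filter_upwards [ae_pi_abs_le fun _ => hρ] with x hx
  exact sqrt_mul_setIntegral_tangentKernel_le hφ hφ' hlower (by positivity) (abs_sum_div_le hn hx)

lemma integral_mul_exp_le_of_integral_tilted_le (hρ : ∀ᵐ x ∂ρ, |x| ≤ L) (hn : n ≠ 0)
    (hφ : Continuous φ) (hφ' : Continuous φ')
    (hlower : ∀ u v, |u| ≤ L → |v| ≤ L → 1 / 2 * (u - v) ^ 2 ≤ φ u - (φ v + φ' v * (u - v)))
    (hupper : ∀ u v, |u| ≤ L → |v| ≤ L → φ u - (φ v + φ' v * (u - v)) ≤ K * (u - v) ^ 2)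
    (hK : 0 ≤ K) (hL : 1 ≤ L) {f : (Fin n → ℝ) → ℝ} (hf : Continuous f) (hf0 : ∀ x, 0 ≤ f x)
    {A : ℝ → ℝ} (hA : Continuous A) {M : ℝ} (hM : 0 ≤ M)
    (hfA : ∀ v, |v| ≤ L → ∫ x, f x ∂Measure.pi (fun _ => ρ.tilted (φ' v * ·)) ≤ A v)
    (hAM : ∫ v in Icc (-L) L, A v * exp (n * laplaceRate (hfun ρ) φ φ' v) ≤
      M * ∫ v in Icc (-L) L, exp (n * laplaceRate (hfun ρ) φ φ' v)) :
    ∫ x, f x * exp (n * φ ((∑ i, x i) / n)) ∂Measure.pi (fun _ => ρ) ≤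
      exp K * √(2 * π) * M *
        ∫ x : Fin n → ℝ, exp (n * φ ((∑ i, x i) / n)) ∂Measure.pi (fun _ => ρ) := by
  set Ψ := laplaceRate (hfun ρ) φ φ'
  have hΨ : Continuous Ψ :=
    continuous_laplaceRate (contDiff_hfun hρ 0).continuous hφ hφ'
  have htilted : ∫ v in Icc (-L) L, exp (n * Ψ v) *
      ∫ x, f x ∂Measure.pi (fun _ => ρ.tilted (φ' v * ·)) ≤
        ∫ v in Icc (-L) L, A v * exp (n * Ψ v) := by
    refine integral_mono_of_nonneg (Eventually.of_forall fun v => mul_nonneg (exp_pos _).le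
      (integral_nonneg hf0)) (by fun_prop : Continuous _).integrableOn_Icc ?_
    filter_upwards [ae_restrict_mem measurableSet_Icc] with v hv
    rw [mul_comm (A v)]
    exact mul_le_mul_of_nonneg_left (hfA v (abs_le.2 hv)) (exp_pos _).le
  calc ∫ x, f x * exp (n * φ ((∑ i, x i) / n)) ∂Measure.pi (fun _ => ρ)
      ≤ exp K * (√n * ∫ v in Icc (-L) L, exp (n * Ψ v) *
          ∫ x, f x ∂Measure.pi fun _ => ρ.tilted (φ' v * ·)) :=
        integral_mul_exp_le_setIntegral_laplaceRate hρ hn hφ hφ' hupper hK hL hf hf0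
    _ ≤ exp K * (√n * (M * ∫ v in Icc (-L) L, exp (n * Ψ v))) := by
        gcongr
        exact htilted.trans hAM
    _ = exp K * M * (√n * ∫ v in Icc (-L) L, exp (n * Ψ v)) := by ring
    _ ≤ exp K * M * (√(2 * π) * ∫ x : Fin n → ℝ, exp (n * φ ((∑ i, x i) / n))
          ∂Measure.pi (fun _ => ρ)) :=
        mul_le_mul_of_nonneg_left (setIntegral_laplaceRate_le_integral_exp hρ hn hφ hφ' hlower)
          (by positivity)
    _ = _ := by ring

end Linearization

section TestFunction

lemma integral_affine_mul_le {α : Type*} [MeasurableSpace α] {μ : Measure α} {p w : α → ℝ}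
    {A D E M b : ℝ} (hw : Integrable w μ) (hw0 : ∀ x, 0 ≤ w x)
    (hpw : Integrable (fun x => p x * w x) μ) (hA : 0 ≤ A) (hD : 0 ≤ D) (hE : 0 ≤ E)
    (hM : 0 ≤ M) (hb : 0 ≤ b) (h : ∫ x, p x * w x ∂μ ≤ M * E * ∫ x, w x ∂μ) :
    ∫ x, (A + D * (b * p x)) * w x ∂μ ≤ (1 + b * M) * (A + D * E) * ∫ x, w x ∂μ := by
  have hJ : 0 ≤ ∫ x, w x ∂μ := integral_nonneg hw0
  calc ∫ x, (A + D * (b * p x)) * w x ∂μ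
      = ∫ x, (A * w x + D * b * (p x * w x)) ∂μ := by congr with x; ring
    _ = A * ∫ x, w x ∂μ + D * b * ∫ x, p x * w x ∂μ := by
        rw [integral_add (hw.const_mul A) (hpw.const_mul (D * b)), integral_const_mul,
          integral_const_mul]
    _ ≤ A * ∫ x, w x ∂μ + D * b * (M * E * ∫ x, w x ∂μ) := by gcongr
    _ = (A + b * M * (D * E)) * ∫ x, w x ∂μ := by ring
    _ ≤ (1 + b * M) * (A + D * E) * ∫ x, w x ∂μ := by
        gcongr
        nlinarith [mul_nonneg (mul_nonneg hb hM) hA, mul_nonneg hD hE]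

variable {ρ : Measure ℝ} [IsProbabilityMeasure ρ] {L : ℝ}

lemma exists_integral_sq_average_pi_tilted_le (hρ : ∀ᵐ x ∂ρ, |x| ≤ L) (hmean : ∫ x, x ∂ρ = 0)
    (T : ℝ) : ∃ A D, 0 ≤ A ∧ 0 ≤ D ∧ ∀ n : ℕ, n ≠ 0 → ∀ t, |t| ≤ T →
      ∫ x : Fin n → ℝ, ((∑ i, x i) / n) ^ 2 ∂Measure.pi (fun _ => ρ.tilted (t * ·)) ≤
        A / n + D * t ^ 2 := by
  obtain ⟨D, hD, hlinear⟩ := exists_abs_integral_tilted_linear_le hρ hmean continuous_id hmean T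
  refine ⟨L ^ 2, D ^ 2, sq_nonneg L, sq_nonneg D, fun n hn t ht => ?_⟩
  have hν : ∀ᵐ x ∂ρ.tilted (t * ·), |x| ≤ L := (tilted_absolutelyContinuous ρ _).ae_le hρ
  have : IsProbabilityMeasure (ρ.tilted (t * ·)) :=
    isProbabilityMeasure_tilted (integrable_of_continuous_of_ae_abs_le hρ (by fun_prop))
  have hmem : MemLp id 2 (ρ.tilted (t * ·)) := MemLp.of_bound aestronglyMeasurable_id L hν
  have hvar : Var[id; ρ.tilted (t * ·)] ≤ L ^ 2 :=
    (variance_le_sq_of_bounded (hν.mono fun x hx => abs_le.1 hx) aemeasurable_id).trans_eq (by ring)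
  have hsq : (∫ x, x ∂ρ.tilted (t * ·)) ^ 2 ≤ D ^ 2 * t ^ 2 := by
    rw [← mul_pow]
    exact sq_le_sq.2 ((hlinear t ht).trans_eq (by rw [abs_mul, abs_of_nonneg hD]))
  have hmoment := integral_sq_average_pi hn hmem
  simp only [id_eq, ← mul_comm (Finset.sum _ _), mul_one_div] at hmoment
  rw [hmoment]
  gcongr

lemma exists_integral_abs_average_pi_tilted_le {ψ : ℝ → ℝ} (hρ : ∀ᵐ x ∂ρ, |x| ≤ L)
    (hmean : ∫ x, x ∂ρ = 0) (hψ : Continuous ψ) (hψ0 : ∫ x, ψ x ∂ρ = 0)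
    (hψ1 : ∫ x, ψ x * x ∂ρ = 0) (T : ℝ) :
    ∃ A D, 0 ≤ A ∧ 0 ≤ D ∧ ∀ n : ℕ, n ≠ 0 → ∀ t, |t| ≤ T →
      ∫ x : Fin n → ℝ, |1 / (n : ℝ) * ∑ i, ψ (x i)| ∂Measure.pi (fun _ => ρ.tilted (t * ·)) ≤
        A / √n + D * t ^ 2 := by
  obtain ⟨B, hB, hψB⟩ := exists_ae_abs_le_of_continuous hρ hψ
  obtain ⟨D, hD, hquadratic⟩ := exists_abs_integral_tilted_quadratic_le hρ hmean hψ hψ0 hψ1 T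
  refine ⟨B, D, hB, hD, fun n hn t ht => ?_⟩
  have hν : ∀ᵐ x ∂ρ.tilted (t * ·), |ψ x| ≤ B := (tilted_absolutelyContinuous ρ _).ae_le hψB
  have : IsProbabilityMeasure (ρ.tilted (t * ·)) :=
    isProbabilityMeasure_tilted (integrable_of_continuous_of_ae_abs_le hρ (by fun_prop))
  have hvar : Var[ψ; ρ.tilted (t * ·)] ≤ B ^ 2 :=
    (variance_le_sq_of_bounded (hν.mono fun x hx => abs_le.1 hx)
      hψ.aemeasurable).trans_eq (by ring)
  have hmean_tilted : |∫ x, ψ x ∂ρ.tilted (t * ·)| ≤ D * t ^ 2 := by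
    simpa only [zero_mul, zero_add] using hquadratic 0 t le_rfl zero_le_one ht
  refine (integral_abs_average_pi_le hn
    (MemLp.of_bound hψ.aestronglyMeasurable B hν)).trans (add_le_add ?_ hmean_tilted)
  have hsqrt : √(Var[ψ; ρ.tilted (t * ·)] / n) ≤ √(B ^ 2 / n) := sqrt_le_sqrt (by gcongr)
  rwa [sqrt_div (sq_nonneg B), sqrt_sq hB] at hsqrt

lemma exists_integral_mul_exp_tiltExponent_le (hρ : ∀ᵐ x ∂ρ, |x| ≤ L) (hL : 1 ≤ L) {a c C : ℝ}
    {m : ℕ} (ha : 0 ≤ a) (hc : 0 < c) (hC : 0 ≤ C) (hm : 3 ≤ m) (heven : Even m)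
    (hh : ∀ t, |t| ≤ (1 + a * m * L ^ (m - 2)) * L →
      c * t ^ m ≤ hfun ρ t ∧ hfun ρ t ≤ C * t ^ m) :
    ∃ M, 0 < M ∧ ∀ (n : ℕ) (r σ : ℝ), n ≠ 0 → 0 < r → r ≤ 1 → n * r ^ m = 1 → 0 ≤ σ →
      ∀ (f : (Fin n → ℝ) → ℝ) (A D : ℝ), Continuous f → (∀ x, 0 ≤ f x) → 0 ≤ A → 0 ≤ D →
        (∀ t, |t| ≤ (1 + a * m * L ^ (m - 2)) * L →
          ∫ x, f x ∂Measure.pi (fun _ => ρ.tilted (t * ·)) ≤ A + D * t ^ 2) →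
        ∫ x, f x * exp (n * tiltExponent a σ m ((∑ i, x i) / n)) ∂Measure.pi (fun _ => ρ) ≤
          M * (A + D * (r ^ 2 + σ ^ 2)) *
            ∫ x : Fin n → ℝ, exp (n * tiltExponent a σ m ((∑ i, x i) / n))
              ∂Measure.pi (fun _ => ρ) := by
  obtain ⟨M, hM, hmoment⟩ := exists_setIntegral_sq_mul_exp_laplaceRate_le
    (contDiff_hfun hρ 0).continuous ha hL hc hC (by omega) heven hh
  set B := 1 + a * m * L ^ (m - 2)
  have hB : 0 ≤ B := by positivity
  set K := (1 + a * (m * (m - 1 : ℕ) * L ^ (m - 2))) / 2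
  have hK : 0 ≤ K := by positivity
  refine ⟨exp K * √(2 * π) * (1 + B ^ 2 * M), by positivity,
    fun n r σ hn hr hr1 hnr hσ f A D hf hf0 hA hD hfA => ?_⟩
  set Ψ := laplaceRate (hfun ρ) (tiltExponent a σ m) (tiltSlope a σ m)
  have hΨ : Continuous Ψ := continuous_laplaceRate (contDiff_hfun hρ 0).continuous
    (continuous_tiltExponent a σ m) (continuous_tiltSlope a σ m)
  have hslope (v : ℝ) (hv : |v| ≤ L) : |tiltSlope a σ m v| ≤ B * |v| :=
    abs_tiltSlope_le ha hσ (by omega) hv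
  have hexp : IntegrableOn (fun v => exp (n * Ψ v)) (Icc (-L) L) :=
    (by fun_prop : Continuous _).integrableOn_Icc
  have hweighted : ∫ v in Icc (-L) L, (A + D * (B ^ 2 * v ^ 2)) * exp (n * Ψ v) ≤
      (1 + B ^ 2 * M) * (A + D * (r ^ 2 + σ ^ 2)) * ∫ v in Icc (-L) L, exp (n * Ψ v) :=
    integral_affine_mul_le hexp (fun v => (exp_pos _).le)
      (by fun_prop : Continuous _).integrableOn_Icc hA hD (by positivity) hM.le (sq_nonneg B)
      (hmoment n r σ n.cast_nonneg hr hr1 hnr hσ)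
  refine (integral_mul_exp_le_of_integral_tilted_le hρ hn (continuous_tiltExponent a σ m)
    (continuous_tiltSlope a σ m)
    (fun u v hu hv => (tiltExponent_sub_tangent_mem_Icc ha hσ hm hu hv).1)
    (fun u v hu hv => (tiltExponent_sub_tangent_mem_Icc ha hσ hm hu hv).2)
    hK hL hf hf0 (by fun_prop) (by positivity)
    (fun v hv => (hfA _ ((hslope v hv).trans ?_)).trans ?_) hweighted).trans_eq (by ring)
  · gcongr
  · gcongr
    rw [← mul_pow]
    exact sq_le_sq.2 ((hslope v hv).trans_eq (by rw [abs_mul, abs_of_nonneg hB]))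

end TestFunction

section SingleSiteConditioning

lemma abs_integral_tilted_le_of_ae_abs_le {α : Type*} [MeasurableSpace α] {ν : Measure α}
    [IsProbabilityMeasure ν] {f : α → ℝ} {B : ℝ} (H : α → ℝ) (hf : ∀ᵐ y ∂ν, |f y| ≤ B) :
    |∫ y, f y ∂ν.tilted H| ≤ B := by
  by_cases hexp : Integrable (fun y => exp (H y)) ν
  · have := isProbabilityMeasure_tilted hexp
    simpa using norm_integral_le_of_norm_le_const (μ := ν.tilted H) (f := f)
      ((tilted_absolutelyContinuous ν H).ae_le hf)
  · obtain ⟨y, hy⟩ := hf.exists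
    rw [tilted_of_not_integrable hexp, integral_zero_measure, abs_zero]
    exact (abs_nonneg _).trans hy

variable {ι : Type*} [DecidableEq ι] {X : ι → Type*} [∀ i, MeasurableSpace (X i)]
  {μ : ∀ i, Measure (X i)} [∀ i, IsProbabilityMeasure (μ i)] {i : ι} {H : (∀ i, X i) → ℝ}
  {f : X i → ℝ}

lemma measurable_integral_tilted_update (hH : Measurable H) (hf : Measurable f) :
    Measurable fun x => ∫ y, f y ∂(μ i).tilted fun y => H (Function.update x i y) := by
  have hHu : Measurable fun p : (∀ i, X i) × X i => H (Function.update p.1 i p.2) :=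
    hH.comp measurable_update'
  simp only [integral_tilted_eq_div]
  exact (((hf.comp measurable_snd).mul hHu.exp).stronglyMeasurable.integral_prod_right.div
    hHu.exp.stronglyMeasurable.integral_prod_right).measurable

variable [Fintype ι]

lemma measurePreserving_update_pi (μ : ∀ i, Measure (X i)) [∀ i, IsProbabilityMeasure (μ i)]
    (i : ι) :
    MeasurePreserving (fun p : (∀ i, X i) × X i => Function.update p.1 i p.2)
      ((Measure.pi μ).prod (μ i)) (Measure.pi μ) := by
  refine ⟨measurable_update', (Measure.pi_eq fun s hs => ?_).symm⟩
  have hpre : (fun p : (∀ i, X i) × X i => Function.update p.1 i p.2) ⁻¹' univ.pi s =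
      univ.pi (Function.update s i univ) ×ˢ s i := by
    ext p
    simp only [mem_preimage, mem_univ_pi, mem_prod]
    refine ⟨fun h => ⟨fun j => ?_, by simpa using h i⟩, fun h j => ?_⟩ <;>
      rcases eq_or_ne j i with rfl | hj
    · simp
    · simpa [hj] using h j
    · simpa using h.2
    · simpa [hj] using h.1 j
  rw [Measure.map_apply measurable_update' (.univ_pi hs), hpre, Measure.prod_prod, Measure.pi_pi,
    ← Finset.mul_prod_erase _ _ (Finset.mem_univ i),
    ← Finset.mul_prod_erase _ _ (Finset.mem_univ i), Function.update_self, measure_univ, one_mul,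
    mul_comm]
  congr 1
  refine Finset.prod_congr rfl fun j hj => ?_
  rw [Function.update_of_ne (Finset.ne_of_mem_erase hj)]

lemma setIntegral_pi_eq_setIntegral_update {s : Set (∀ i, X i)} (hs : MeasurableSet s)
    (hupdate : ∀ x y, Function.update x i y ∈ s ↔ x ∈ s) {F : (∀ i, X i) → ℝ}
    (hF : Integrable F (Measure.pi μ)) :
    ∫ x in s, F x ∂Measure.pi μ =
      ∫ x in s, ∫ y, F (Function.update x i y) ∂μ i ∂Measure.pi μ := by
  have hmp := measurePreserving_update_pi μ i
  have hsF := hF.indicator hs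
  have hmap := integral_map (f := s.indicator F) hmp.aemeasurable
    (by rw [hmp.map_eq]; exact hsF.aestronglyMeasurable)
  have hprod : Integrable (fun p : (∀ i, X i) × X i => s.indicator F (Function.update p.1 i p.2))
      ((Measure.pi μ).prod (μ i)) := hmp.integrable_comp_of_integrable hsF
  rw [hmp.map_eq, integral_prod _ hprod] at hmap
  rw [← integral_indicator hs, ← integral_indicator hs, hmap]
  congr with x
  by_cases hx : x ∈ s
  · simp only [indicator, hx, hupdate, if_true]
  · simp only [indicator, hx, hupdate, if_false, integral_zero]

lemma setIntegral_tilted_pi_eq_setIntegral_integral_tilted_update (hH : Measurable H)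
    (hexp : Integrable (fun x => exp (H x)) (Measure.pi μ)) {B : ℝ} (hf : Measurable f)
    (hfB : ∀ᵐ y ∂μ i, |f y| ≤ B) {s : Set (∀ i, X i)} (hs : MeasurableSet s)
    (hupdate : ∀ x y, Function.update x i y ∈ s ↔ x ∈ s) :
    ∫ x in s, f (x i) ∂(Measure.pi μ).tilted H =
      ∫ x in s, (∫ y, f y ∂(μ i).tilted fun y => H (Function.update x i y))
        ∂(Measure.pi μ).tilted H := by
  set q := fun x => ∫ y, f y ∂(μ i).tilted fun y => H (Function.update x i y)
  have hq : Measurable q := measurable_integral_tilted_update hH hf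
  have hqB (x) : |q x| ≤ B := abs_integral_tilted_le_of_ae_abs_le _ hfB
  have hfi : Measurable fun x : ∀ i, X i => f (x i) := hf.comp (measurable_pi_apply i)
  have hfiB : ∀ᵐ x ∂Measure.pi μ, ‖f (x i)‖ ≤ B :=
    (Measure.quasiMeasurePreserving_eval μ i).ae hfB
  have hslice : ∀ᵐ x ∂Measure.pi μ, Integrable (fun y => exp (H (Function.update x i y))) (μ i) :=
    ((measurePreserving_update_pi μ i).integrable_comp_of_integrable hexp).prod_right_ae
  simp only [setIntegral_tilted, smul_eq_mul]
  rw [setIntegral_pi_eq_setIntegral_update hs hupdate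
      ((hexp.div_const _).mul_bdd hfi.aestronglyMeasurable hfiB),
    setIntegral_pi_eq_setIntegral_update hs hupdate
      ((hexp.div_const _).mul_bdd hq.aestronglyMeasurable (.of_forall hqB))]
  refine setIntegral_congr_ae hs (hslice.mono fun x hx _ => ?_)
  have hqx (y) : q (Function.update x i y) = q x := by simp [q]
  have hZ : ∫ y, exp (H (Function.update x i y)) ∂μ i ≠ 0 := (integral_exp_pos hx).ne'
  have hqZ : q x * ∫ y, exp (H (Function.update x i y)) ∂μ i =
      ∫ y, f y * exp (H (Function.update x i y)) ∂μ i := by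
    simp only [q, integral_tilted_eq_div, div_mul_cancel₀ _ hZ]
  simp only [Function.update_self, hqx, div_mul_eq_mul_div, integral_div]
  rw [integral_mul_const, mul_comm _ (q x), hqZ]
  simp only [mul_comm (f _)]

lemma integral_tilted_update_ae_eq_condExp (z : X i) (hH : Measurable H)
    (hexp : Integrable (fun x => exp (H x)) (Measure.pi μ)) {B : ℝ} (hf : Measurable f)
    (hfB : ∀ᵐ y ∂μ i, |f y| ≤ B) :
    (fun x => ∫ y, f y ∂(μ i).tilted fun y => H (Function.update x i y))
      =ᵐ[(Measure.pi μ).tilted H]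
      ((Measure.pi μ).tilted H)[fun x => f (x i) |
        MeasurableSpace.comap (fun x => Function.update x i z) inferInstance] := by
  have hupdate : Measurable fun x : ∀ i, X i => Function.update x i z :=
    measurable_update'.comp (measurable_id.prodMk measurable_const)
  have hq := measurable_integral_tilted_update (μ := μ) hH hf
  have hfi : Measurable fun x : ∀ i, X i => f (x i) := hf.comp (measurable_pi_apply i)
  have : IsProbabilityMeasure ((Measure.pi μ).tilted H) := isProbabilityMeasure_tilted hexp
  refine ae_eq_condExp_of_forall_setIntegral_eq hupdate.comap_le
    (.of_bound hfi.aestronglyMeasurable B ((tilted_absolutelyContinuous _ H).ae_le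
      ((Measure.quasiMeasurePreserving_eval μ i).ae hfB)))
    (fun s _ _ => (Integrable.of_bound hq.aestronglyMeasurable B
      (.of_forall fun x => abs_integral_tilted_le_of_ae_abs_le _ hfB)).integrableOn) ?_ ?_
  · rintro _ ⟨s, hs, rfl⟩ -
    exact (setIntegral_tilted_pi_eq_setIntegral_integral_tilted_update hH hexp hf hfB
      (hupdate hs) fun x y => by simp).symm
  · have hcomp := hq.comp (comap_measurable fun x : ∀ i, X i => Function.update x i z)
    simp only [Function.comp_def, Function.update_idem] at hcomp
    exact hcomp.stronglyMeasurable.aestronglyMeasurable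

end SingleSiteConditioning

section CurieWeiss

variable {ρ : Measure ℝ} [IsProbabilityMeasure ρ] {L : ℝ} {n : ℕ}

lemma cwMeasure_eq_tilted (ρ : Measure ℝ) [IsProbabilityMeasure ρ] (n : ℕ) :
    cwMeasure ρ n = (Measure.pi fun _ => ρ).tilted fun x => (∑ i, x i) ^ 2 / (2 * n) :=
  rfl

lemma tilted_const_add {α : Type*} [MeasurableSpace α] (ν : Measure α) (c : ℝ) (F : α → ℝ) :
    ν.tilted (fun x => c + F x) = ν.tilted F := by
  simp only [Measure.tilted, exp_add, integral_const_mul, mul_div_mul_left _ _ (exp_ne_zero c)]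

lemma tilted_sq_sum_update (ρ : Measure ℝ) (hn : n ≠ 0) (x : Fin n → ℝ) (i : Fin n) :
    (ρ.tilted fun y => (∑ j, Function.update x i y j) ^ 2 / (2 * n)) =
      ρ.tilted fun y => 1 / (2 * n) * y ^ 2 + (∑ j, x j - x i) / n * y := by
  rw [← tilted_const_add ρ ((∑ j, x j - x i) ^ 2 / (2 * n))
    fun y => 1 / (2 * n) * y ^ 2 + (∑ j, x j - x i) / n * y]
  congr with y
  rw [Finset.sum_update_of_mem (Finset.mem_univ i), Finset.sum_eq_add_sum_sdiff_singleton_of_mem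
    (Finset.mem_univ i)]
  field_simp
  ring

lemma ae_cwMeasure_abs_le (hρ : ∀ᵐ x ∂ρ, |x| ≤ L) (n : ℕ) :
    ∀ᵐ x ∂cwMeasure ρ n, ∀ i, |x i| ≤ L :=
  (tilted_absolutelyContinuous _ _).ae_le (ae_pi_abs_le fun _ => hρ)

lemma sq_sum_sub_div_le {x : Fin n → ℝ} (hn : n ≠ 0) (hx : ∀ i, |x i| ≤ L) (i : Fin n) :
    ((∑ j, x j - x i) / n) ^ 2 ≤ 2 * ((∑ j, x j) / n) ^ 2 + 2 * L ^ 2 / n := by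
  have hn1 : (1 : ℝ) ≤ n := Nat.one_le_cast.2 (Nat.one_le_iff_ne_zero.2 hn)
  have hxi : (x i / n) ^ 2 ≤ L ^ 2 / n := by
    rw [div_pow]
    exact div_le_div₀ (sq_nonneg L) (sq_le_sq' (abs_le.1 (hx i)).1 (abs_le.1 (hx i)).2)
      (by positivity) (le_self_pow₀ hn1 two_ne_zero)
  calc ((∑ j, x j - x i) / n) ^ 2 = ((∑ j, x j) / n + -(x i / n)) ^ 2 := by ring
    _ ≤ 2 * (((∑ j, x j) / n) ^ 2 + (-(x i / n)) ^ 2) := add_sq_le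
    _ ≤ 2 * ((∑ j, x j) / n) ^ 2 + 2 * L ^ 2 / n := by
      rw [neg_sq, mul_div_assoc]; linarith

lemma integral_sub_integral_mul_eq_zero {ψ : ℝ → ℝ} (hρ : ∀ᵐ x ∂ρ, |x| ≤ L)
    (hmean : ∫ x, x ∂ρ = 0) (hψ : Continuous ψ) (hψ1 : ∫ x, ψ x * x ∂ρ = 0) :
    ∫ x, (ψ x - ∫ y, ψ y ∂ρ) * x ∂ρ = 0 := by
  simp only [sub_mul]
  rw [integral_sub (integrable_of_continuous_of_ae_abs_le hρ (by fun_prop))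
    (integrable_of_continuous_of_ae_abs_le hρ (by fun_prop)), integral_const_mul, hψ1, hmean]
  simp

lemma integral_sub_integral_eq_zero {ψ : ℝ → ℝ} (hρ : ∀ᵐ x ∂ρ, |x| ≤ L) (hψ : Continuous ψ) :
    ∫ x, (ψ x - ∫ y, ψ y ∂ρ) ∂ρ = 0 := by
  rw [integral_sub (integrable_of_continuous_of_ae_abs_le hρ hψ) (integrable_const _)]
  simp

lemma exists_abs_integral_tilted_quadratic_sub_integral_le {ψ : ℝ → ℝ}
    (hρ : ∀ᵐ x ∂ρ, |x| ≤ L) (hmean : ∫ x, x ∂ρ = 0) (hψ : Continuous ψ)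
    (hψ1 : ∫ x, ψ x * x ∂ρ = 0) (T : ℝ) :
    ∃ C, 0 ≤ C ∧ ∀ q t, 0 ≤ q → q ≤ 1 → |t| ≤ T →
      |∫ x, ψ x ∂(ρ.tilted fun x => q * x ^ 2 + t * x) - ∫ x, ψ x ∂ρ| ≤ C * (q + t ^ 2) := by
  obtain ⟨C, hC, htilt⟩ := exists_abs_integral_tilted_quadratic_le
    (ψ := fun x => ψ x - ∫ y, ψ y ∂ρ) hρ hmean (by fun_prop)
    (integral_sub_integral_eq_zero hρ hψ) (integral_sub_integral_mul_eq_zero hρ hmean hψ hψ1) T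
  refine ⟨C, hC, fun q t hq hq1 ht => ?_⟩
  have hac := (tilted_absolutelyContinuous ρ fun x => q * x ^ 2 + t * x).ae_le hρ
  have : IsProbabilityMeasure (ρ.tilted fun x => q * x ^ 2 + t * x) :=
    isProbabilityMeasure_tilted (integrable_of_continuous_of_ae_abs_le hρ (by fun_prop))
  have h := htilt q t hq hq1 ht
  rwa [integral_sub (integrable_of_continuous_of_ae_abs_le hac hψ) (integrable_const _),
    integral_const, probReal_univ, one_smul] at h

lemma exists_abs_condExp_Fi_sub_integral_le {ψ : ℝ → ℝ} (hρ : ∀ᵐ x ∂ρ, |x| ≤ L)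
    (hmean : ∫ x, x ∂ρ = 0) (hψ : Continuous ψ) (hψ1 : ∫ x, ψ x * x ∂ρ = 0) :
    ∃ C, 0 ≤ C ∧ ∀ n : ℕ, n ≠ 0 → ∀ i, ∀ᵐ x ∂cwMeasure ρ n,
      |((cwMeasure ρ n)[fun y => ψ (y i) | Fi n i]) x - ∫ y, ψ y ∂ρ| ≤
        C * (((∑ j, x j) / n) ^ 2 + 1 / n) := by
  obtain ⟨B, -, hψB⟩ := exists_ae_abs_le_of_continuous hρ hψ
  obtain ⟨C, hC, htilt⟩ :=
    exists_abs_integral_tilted_quadratic_sub_integral_le hρ hmean hψ hψ1 (2 * L)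
  refine ⟨C * (2 + 2 * L ^ 2), by positivity, fun n hn i => ?_⟩
  have hn1 : (1 : ℝ) ≤ n := Nat.one_le_cast.2 (Nat.one_le_iff_ne_zero.2 hn)
  have hcond := integral_tilted_update_ae_eq_condExp (μ := fun _ : Fin n => ρ) (i := i) (0 : ℝ)
    (by fun_prop : Measurable fun x : Fin n → ℝ => (∑ i, x i) ^ 2 / (2 * n))
    (integrable_pi_of_continuous_of_ae_abs_le (ae_pi_abs_le fun _ => hρ) (by fun_prop))
    hψ.measurable hψB
  filter_upwards [hcond, ae_cwMeasure_abs_le hρ n] with x hx hxL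
  have hfield : |(∑ j, x j - x i) / n| ≤ 2 * L := by
    rw [sub_div]
    have hxi : |x i / n| ≤ L := by
      rw [abs_div, Nat.abs_cast]; exact (div_le_self (abs_nonneg _) hn1).trans (hxL i)
    linarith [abs_sub ((∑ j, x j) / n) (x i / n), abs_sum_div_le hn hxL]
  refine (congrArg (|· - ∫ y, ψ y ∂ρ|) hx).symm.trans_le ?_
  rw [tilted_sq_sum_update ρ hn x i]
  refine (htilt _ _ (by positivity) (div_le_one_of_le₀ (by linarith) (by positivity))
    hfield).trans ?_
  calc C * (1 / (2 * n) + ((∑ j, x j - x i) / n) ^ 2)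
      ≤ C * (1 / n + (2 * ((∑ j, x j) / n) ^ 2 + 2 * L ^ 2 / n)) := by
        gcongr
        · linarith
        · exact sq_sum_sub_div_le hn hxL i
    _ = C * (2 * ((∑ j, x j) / n) ^ 2 + (1 + 2 * L ^ 2) * (1 / n)) := by ring
    _ ≤ C * ((2 + 2 * L ^ 2) * ((∑ j, x j) / n) ^ 2 + (2 + 2 * L ^ 2) * (1 / n)) := by
        gcongr
        · nlinarith [sq_nonneg L]
        · norm_num
    _ = C * (2 + 2 * L ^ 2) * (((∑ j, x j) / n) ^ 2 + 1 / n) := by ring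

lemma exists_abs_average_sub_condExp_le {ψ : ℝ → ℝ} (hρ : ∀ᵐ x ∂ρ, |x| ≤ L)
    (hmean : ∫ x, x ∂ρ = 0) (hψ : Continuous ψ) (hψ1 : ∫ x, ψ x * x ∂ρ = 0) :
    ∃ C, 0 ≤ C ∧ ∀ n : ℕ, n ≠ 0 → ∀ᵐ x ∂cwMeasure ρ n,
      |1 / (n : ℝ) * ∑ i, (ψ (x i) - ((cwMeasure ρ n)[fun y => ψ (y i) | Fi n i]) x)| ≤
        |1 / (n : ℝ) * ∑ i, (ψ (x i) - ∫ y, ψ y ∂ρ)| + C * (((∑ j, x j) / n) ^ 2 + 1 / n) := by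
  obtain ⟨C, hC, hcond⟩ := exists_abs_condExp_Fi_sub_integral_le hρ hmean hψ hψ1
  refine ⟨C, hC, fun n hn => ?_⟩
  filter_upwards [ae_all_iff.2 (hcond n hn)] with x hx
  set e := fun i => ((cwMeasure ρ n)[fun y => ψ (y i) | Fi n i]) x
  have hsplit : 1 / (n : ℝ) * ∑ i, (ψ (x i) - e i) =
      1 / (n : ℝ) * ∑ i, (ψ (x i) - ∫ y, ψ y ∂ρ) - (∑ i, (e i - ∫ y, ψ y ∂ρ)) / n := by
    simp only [Finset.sum_sub_distrib]
    ring
  rw [hsplit]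
  exact (abs_sub _ _).trans (add_le_add_right (abs_sum_div_le hn hx) _)

lemma exists_integral_abs_average_add_sq_average_pi_tilted_le {ψ : ℝ → ℝ}
    (hρ : ∀ᵐ x ∂ρ, |x| ≤ L) (hmean : ∫ x, x ∂ρ = 0) (hψ : Continuous ψ)
    (hψ0 : ∫ x, ψ x ∂ρ = 0) (hψ1 : ∫ x, ψ x * x ∂ρ = 0) {C : ℝ} (hC : 0 ≤ C) (T : ℝ) :
    ∃ A D, 0 ≤ A ∧ 0 ≤ D ∧ ∀ n : ℕ, n ≠ 0 → ∀ t, |t| ≤ T →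
      ∫ x : Fin n → ℝ, (|1 / (n : ℝ) * ∑ i, ψ (x i)| + C * (((∑ i, x i) / n) ^ 2 + 1 / n))
        ∂Measure.pi (fun _ => ρ.tilted (t * ·)) ≤ A / √n + D * t ^ 2 := by
  obtain ⟨A₁, D₁, hA₁, hD₁, hsq⟩ := exists_integral_sq_average_pi_tilted_le hρ hmean T
  obtain ⟨A₂, D₂, hA₂, hD₂, habs⟩ :=
    exists_integral_abs_average_pi_tilted_le hρ hmean hψ hψ0 hψ1 T
  refine ⟨A₂ + C * (A₁ + 1), D₂ + C * D₁, by positivity, by positivity, fun n hn t ht => ?_⟩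
  have hν : ∀ᵐ x ∂ρ.tilted (t * ·), |x| ≤ L := (tilted_absolutelyContinuous ρ _).ae_le hρ
  have : IsProbabilityMeasure (ρ.tilted (t * ·)) :=
    isProbabilityMeasure_tilted (integrable_of_continuous_of_ae_abs_le hρ (by fun_prop))
  have hint {f : (Fin n → ℝ) → ℝ} (hf : Continuous f) :
      Integrable f (Measure.pi fun _ => ρ.tilted (t * ·)) :=
    integrable_pi_of_continuous_of_ae_abs_le (ae_pi_abs_le fun _ => hν) hf
  have hn1 : (1 : ℝ) ≤ n := Nat.one_le_cast.2 (Nat.one_le_iff_ne_zero.2 hn)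
  have hsqrt : √(n : ℝ) ≤ n := sqrt_le_iff.2 ⟨by positivity, le_self_pow₀ hn1 two_ne_zero⟩
  rw [integral_add (hint (by fun_prop)) (hint (by fun_prop)), integral_const_mul,
    integral_add (hint (by fun_prop)) (integrable_const _), integral_const, probReal_univ, one_smul]
  calc _ ≤ A₂ / √n + D₂ * t ^ 2 + C * (A₁ / n + D₁ * t ^ 2 + 1 / n) := by
        gcongr
        exacts [habs n hn t ht, hsq n hn t ht]
    _ ≤ A₂ / √n + D₂ * t ^ 2 + C * (A₁ / √n + D₁ * t ^ 2 + 1 / √n) := by gcongr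
    _ = (A₂ + C * (A₁ + 1)) / √n + (D₂ + C * D₁) * t ^ 2 := by ring

end CurieWeiss

section ZetaWeight

variable {a s r : ℝ} {m n k : ℕ}

lemma zeta_mul_pow (a : ℝ) (hs : 0 ≤ s) (hm : m ≠ 0) (w : ℝ) :
    zeta (fun w => a * w ^ m) s w = exp (a * truncPowSub s m w) := by
  unfold zeta
  split_ifs with hneg hle
  · rw [truncPowSub_of_nonpos hs hneg.le, mul_zero, exp_zero]
  · rw [truncPowSub, max_eq_left (not_lt.1 hneg), max_eq_right (sub_nonpos.2 hle), zero_pow hm,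
      sub_zero]
  · rw [truncPowSub, max_eq_left (not_lt.1 hneg), max_eq_left (sub_nonneg.2 (not_le.1 hle).le),
      mul_sub]

lemma zeta_mul_pow_mul_exp_sq_sum (a : ℝ) (hs : 0 ≤ s) (hr : 0 < r) (hm : m ≠ 0)
    (hnr : n * r ^ m = 1) (x : Fin n → ℝ) :
    zeta (fun w => a * w ^ m) s ((∑ i, x i) / n / r) * exp ((∑ i, x i) ^ 2 / (2 * n)) =
      exp (n * tiltExponent a (s * r) m ((∑ i, x i) / n)) := by
  have hn : (n : ℝ) ≠ 0 := left_ne_zero_of_mul_eq_one hnr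
  have hscale := truncPowSub_mul hr.le s m ((∑ i, x i) / n / r)
  rw [mul_div_cancel₀ _ hr.ne'] at hscale
  rw [zeta_mul_pow a hs hm, ← exp_add, tiltExponent, hscale]
  congr 1
  linear_combination (norm := (field_simp; ring))
    -a * truncPowSub s m ((∑ i, x i) / n / r) * hnr

lemma integral_mul_zeta_cwMeasure (ρ : Measure ℝ) [IsProbabilityMeasure ρ] (a : ℝ) (hs : 0 ≤ s)
    (hr : 0 < r) (hm : m ≠ 0) (hnr : n * r ^ m = 1) (f : (Fin n → ℝ) → ℝ) :
    ∫ x, f x * zeta (fun w => a * w ^ m) s ((∑ i, x i) / n / r) ∂cwMeasure ρ n =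
      (∫ x, f x * exp (n * tiltExponent a (s * r) m ((∑ i, x i) / n)) ∂Measure.pi fun _ => ρ) /
        ∫ x : Fin n → ℝ, exp ((∑ i, x i) ^ 2 / (2 * n)) ∂Measure.pi fun _ => ρ := by
  rw [cwMeasure_eq_tilted, integral_tilted_eq_div]
  simp only [mul_assoc, zeta_mul_pow_mul_exp_sq_sum a hs hr hm hnr]

lemma one_div_sqrt_le_sq (hr : 0 < r) (hr1 : r ≤ 1) (hm : 4 ≤ m) (hnr : n * r ^ m = 1) :
    1 / √(n : ℝ) ≤ r ^ 2 := by
  have hn : 0 < n := Nat.pos_of_ne_zero fun h => by simp [h] at hnr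
  rw [← sqrt_one, ← sqrt_div zero_le_one, sqrt_le_left (by positivity), ← hnr,
    mul_div_cancel_left₀ _ (by positivity), ← pow_mul]
  exact pow_le_pow_of_le_one hr.le hr1 hm

lemma cwG_eq_mul_pow (ρ : Measure ℝ) (k : ℕ) :
    cwG ρ k = fun w => iteratedDeriv (2 * k) (hfun ρ) 0 / (2 * k).factorial * w ^ (2 * k) :=
  funext fun w => mul_div_right_comm _ (w ^ (2 * k)) _

lemma exists_cwW_eq_average_div (hn : n ≠ 0) (hk : k ≠ 0) :
    ∃ r : ℝ, 0 < r ∧ r ≤ 1 ∧ n * r ^ (2 * k) = 1 ∧ r ^ 2 = (n : ℝ) ^ (-(1 : ℝ) / (k : ℝ)) ∧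
      ∀ x, cwW n k x = (∑ i, x i) / n / r := by
  have hn0 : (0 : ℝ) < n := by positivity
  refine ⟨(n : ℝ) ^ (-(1 / (2 * k : ℝ))), by positivity,
    rpow_le_one_of_one_le_of_nonpos (Nat.one_le_cast.2 (Nat.one_le_iff_ne_zero.2 hn))
      (by simp only [Left.neg_nonpos_iff]; positivity), ?_, ?_, fun x => ?_⟩
  · rw [← rpow_mul_natCast hn0.le, show -(1 / (2 * k : ℝ)) * (2 * k : ℕ) = -1 by
      push_cast; field_simp, rpow_neg_one, mul_inv_cancel₀ hn0.ne']
  · rw [← rpow_mul_natCast hn0.le]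
    congr 1
    push_cast
    field_simp
  · rw [cwW, rpow_add hn0, rpow_neg_one, rpow_neg hn0.le, div_inv_eq_mul]
    ring

end ZetaWeight

section FluctuationBound

variable {ρ : Measure ℝ} [IsProbabilityMeasure ρ] {L a c C : ℝ} {ψ : ℝ → ℝ} {m k : ℕ}

lemma integral_mul_zeta_cwMeasure_mono (hρ : ∀ᵐ x ∂ρ, |x| ≤ L) {n : ℕ} {f F : (Fin n → ℝ) → ℝ}
    {s r : ℝ} (a : ℝ) (hs : 0 ≤ s) (hm : m ≠ 0) (hF : Continuous F) (hf : ∀ x, 0 ≤ f x)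
    (hfF : ∀ᵐ x ∂cwMeasure ρ n, f x ≤ F x) :
    ∫ x, f x * zeta (fun w => a * w ^ m) s ((∑ i, x i) / n / r) ∂cwMeasure ρ n ≤
      ∫ x, F x * zeta (fun w => a * w ^ m) s ((∑ i, x i) / n / r) ∂cwMeasure ρ n := by
  simp only [zeta_mul_pow a hs hm]
  have : IsProbabilityMeasure (cwMeasure ρ n) := isProbabilityMeasure_tilted
    (integrable_pi_of_continuous_of_ae_abs_le (ae_pi_abs_le fun _ => hρ) (by fun_prop))
  refine integral_mono_of_nonneg (.of_forall fun x => mul_nonneg (hf x) (exp_pos _).le)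
    (integrable_pi_of_continuous_of_ae_abs_le (ae_cwMeasure_abs_le hρ n) (by fun_prop)) ?_
  filter_upwards [hfF] with x hx
  gcongr

lemma exists_integral_abs_average_sub_condExp_mul_zeta_le (hρ : ∀ᵐ x ∂ρ, |x| ≤ L) (hL : 1 ≤ L)
    (hmean : ∫ x, x ∂ρ = 0) (hψ : Continuous ψ) (hψ1 : ∫ x, ψ x * x ∂ρ = 0) (ha : 0 ≤ a)
    (hc : 0 < c) (hC : 0 ≤ C) (hm : 4 ≤ m) (heven : Even m)
    (hh : ∀ t, |t| ≤ (1 + a * m * L ^ (m - 2)) * L →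
      c * t ^ m ≤ hfun ρ t ∧ hfun ρ t ≤ C * t ^ m) :
    ∃ M, 0 < M ∧ ∀ (n : ℕ) (r s : ℝ), n ≠ 0 → 0 < r → r ≤ 1 → n * r ^ m = 1 → 0 ≤ s →
      ∫ x, |1 / (n : ℝ) * ∑ i, (ψ (x i) - ((cwMeasure ρ n)[fun y => ψ (y i) | Fi n i]) x)| *
          zeta (fun w => a * w ^ m) s ((∑ i, x i) / n / r) ∂cwMeasure ρ n ≤
        M * r ^ 2 * (1 + s ^ 2) *
          ∫ x, zeta (fun w => a * w ^ m) s ((∑ i, x i) / n / r) ∂cwMeasure ρ n := by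
  obtain ⟨C₁, hC₁, hcond⟩ := exists_abs_average_sub_condExp_le hρ hmean hψ hψ1
  obtain ⟨A, D, hA, hD, hmoment⟩ := exists_integral_abs_average_add_sq_average_pi_tilted_le
    (ψ := fun x => ψ x - ∫ y, ψ y ∂ρ) hρ hmean (by fun_prop)
    (integral_sub_integral_eq_zero hρ hψ) (integral_sub_integral_mul_eq_zero hρ hmean hψ hψ1) hC₁
    ((1 + a * m * L ^ (m - 2)) * L)
  obtain ⟨M, hM, htransfer⟩ :=
    exists_integral_mul_exp_tiltExponent_le hρ hL ha hc hC (by omega) heven hh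
  refine ⟨M * (A + D + 1), by positivity, fun n r s hn hr hr1 hnr hs => ?_⟩
  have hm0 : m ≠ 0 := by omega
  have : 0 ≤ ∫ x : Fin n → ℝ, exp ((∑ i, x i) ^ 2 / (2 * n)) ∂Measure.pi fun _ => ρ :=
    integral_nonneg fun x => (exp_pos _).le
  have hconst : A / √n + D * (r ^ 2 + (s * r) ^ 2) ≤ (A + D + 1) * (r ^ 2 * (1 + s ^ 2)) := by
    have hdecay : A / √n ≤ A * r ^ 2 := by
      rw [div_eq_mul_one_div]
      exact mul_le_mul_of_nonneg_left (one_div_sqrt_le_sq hr hr1 hm hnr) hA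
    have hrs : 0 ≤ (A + 1) * (r ^ 2 * s ^ 2) + r ^ 2 := by positivity
    linarith
  have hone := integral_mul_zeta_cwMeasure ρ a hs hr hm0 hnr fun _ => 1
  simp only [one_mul] at hone
  rw [hone]
  refine (integral_mul_zeta_cwMeasure_mono hρ a hs hm0 (by fun_prop) (fun x => abs_nonneg _)
    (hcond n hn)).trans ?_
  rw [integral_mul_zeta_cwMeasure ρ a hs hr hm0 hnr, ← mul_div_assoc]
  gcongr
  refine (htransfer n r (s * r) hn hr hr1 hnr (by positivity) _ (A / √n) D (by fun_prop)
    (fun x => by positivity) (by positivity) hD (hmoment n hn)).trans ?_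
  rw [show M * (A + D + 1) * r ^ 2 * (1 + s ^ 2) = M * ((A + D + 1) * (r ^ 2 * (1 + s ^ 2))) by
    ring]
  gcongr

lemma one_le_of_integral_sq_eq_one (hρ : ∀ᵐ x ∂ρ, |x| ≤ L) (hvar : ∫ x, x ^ 2 ∂ρ = 1) :
    1 ≤ L := by
  obtain ⟨y, hy⟩ := hρ.exists
  have hsq : ∫ x, x ^ 2 ∂ρ ≤ ∫ _, L ^ 2 ∂ρ :=
    integral_mono_ae (integrable_of_continuous_of_ae_abs_le hρ (by fun_prop)) (integrable_const _)
      (hρ.mono fun x hx => sq_le_sq' (abs_le.1 hx).1 (abs_le.1 hx).2)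
  rw [hvar, integral_const, probReal_univ, one_smul] at hsq
  exact (one_le_sq_iff₀ ((abs_nonneg y).trans hy)).1 hsq

lemma hfun_pos_of_deriv_ne_zero (hρ : ∀ᵐ x ∂ρ, |x| ≤ L)
    (hderiv : ∀ s, s ≠ 0 → deriv (hfun ρ) s ≠ 0) (hk : k ≠ 0)
    (hder : ∀ i < 2 * k, iteratedDeriv i (hfun ρ) 0 = 0)
    (hpos : 0 < iteratedDeriv (2 * k) (hfun ρ) 0) {s : ℝ} (hs : s ≠ 0) : 0 < hfun ρ s := by
  refine pos_of_deriv_ne_zero_of_eventually_pos (contDiff_hfun hρ 0).continuous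
    (by simpa using hder 0 (by omega)) hderiv ?_ hs
  have hlim := tendsto_div_pow_of_iteratedDeriv_eq_zero (contDiff_hfun hρ (2 * k)) hder
  filter_upwards [hlim.eventually_const_lt (div_pos hpos (by positivity))] with t ht
  rw [div_eq_mul_inv] at ht
  exact pos_of_mul_pos_left ht (inv_nonneg.2 ((even_two_mul k).pow_nonneg t))

lemma ae_abs_le_of_measure_Icc_eq_one (hL : ρ (Icc (-L) L) = 1) : ∀ᵐ x ∂ρ, |x| ≤ L := by
  have hmem : ∀ᵐ x ∂ρ, x ∈ Icc (-L) L := (prob_compl_eq_zero_iff measurableSet_Icc).2 hL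
  exact hmem.mono fun _ hx => abs_le.2 hx

theorem stmt_18_general (hρ : ∀ᵐ x ∂ρ, |x| ≤ L) (hh : ∀ s, s ≠ 0 → 0 < hfun ρ s) (hk : 2 ≤ k)
    (hder : ∀ i < 2 * k, iteratedDeriv i (hfun ρ) 0 = 0)
    (hpos : 0 < iteratedDeriv (2 * k) (hfun ρ) 0) :
    ∃ C, 0 < C ∧ ∀ n : ℕ, n ≠ 0 → ∀ s, 0 ≤ s →
      ∫ x, |1 / (n : ℝ) * ∑ i, (x i ^ 2 - ((cwMeasure ρ n)[fun y => y i ^ 2 | Fi n i]) x)| *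
          zeta (cwG ρ k) s (cwW n k x) ∂cwMeasure ρ n ≤
        C * (n : ℝ) ^ (-(1 : ℝ) / (k : ℝ)) * (1 + |s| ^ 2) *
          ∫ x, zeta (cwG ρ k) s (cwW n k x) ∂cwMeasure ρ n := by
  obtain ⟨hmean, hvar, hthird⟩ := integral_pow_of_iteratedDeriv_hfun_eq_zero hρ
    fun i hi => hder i (by omega)
  have hL := one_le_of_integral_sq_eq_one hρ hvar
  have ha : 0 < iteratedDeriv (2 * k) (hfun ρ) 0 / (2 * k).factorial := by positivity
  rw [cwG_eq_mul_pow]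
  set a := iteratedDeriv (2 * k) (hfun ρ) 0 / (2 * k).factorial
  obtain ⟨c, C, hc, hC, hbounds⟩ := exists_mul_pow_le_and_le_mul_pow
    (contDiff_hfun hρ 0).continuous (by simpa using hder 0 (by omega)) hh (even_two_mul k)
    (by omega) ha (tendsto_div_pow_of_iteratedDeriv_eq_zero (contDiff_hfun hρ (2 * k)) hder)
    ((1 + a * (2 * k : ℕ) * L ^ (2 * k - 2)) * L)
  obtain ⟨M, hM, hmain⟩ := exists_integral_abs_average_sub_condExp_mul_zeta_le
    (ψ := fun x => x ^ 2) hρ hL hmean (by fun_prop) (by simpa only [← pow_succ] using hthird)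
    ha.le hc hC.le (by omega) (even_two_mul k) hbounds
  refine ⟨M, hM, fun n hn s hs => ?_⟩
  obtain ⟨r, hr, hr1, hnr, hr2, hW⟩ := exists_cwW_eq_average_div hn (by omega : k ≠ 0)
  simpa only [hW, ← hr2, sq_abs] using hmain n r s hn hr hr1 hnr hs

end FluctuationBound

theorem stmt_18 (ρ : Measure ℝ) [IsProbabilityMeasure ρ] (L : ℝ) (k : ℕ)
    (hsym : ρ.map (fun x => -x) = ρ)
    (hvar : (∫ x, x ^ 2 ∂ρ) = 1)
    (hL : ρ (Set.Icc (-L) L) = 1)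
    (hroot : ∀ s : ℝ, deriv (hfun ρ) s = 0 ↔ s = 0)
    (hk : 2 ≤ k)
    (hder : ∀ i : ℕ, i ≤ 2 * k - 1 → iteratedDeriv i (hfun ρ) 0 = 0)
    (hpos : 0 < iteratedDeriv (2 * k) (hfun ρ) 0)
    (d₀ d₁ α d₂ d₃ : ℝ)
    (hd₀ : 1 ≤ d₀) (hd₁ : 0 < d₁) (hα0 : 0 ≤ α) (hα1 : α < 1)
    (hd₂ : 0 ≤ d₂) (hd₃ : 0 < d₃) :
    ∃ C : ℝ, 0 < C ∧ ∀ n : ℕ, 1 ≤ n →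
      ∀ (Khat : (Fin n → ℝ) → ℝ → ℝ) (R : (Fin n → ℝ) → ℝ) (κ : ℝ),
        -- the exchangeable-pair Stein identity for `W` with
        -- `δ = 2L n^{−1+1/(2k)}` and `g(w) = h^{(2k)}(0) w^{2k−1}/(2k−1)!`
        (∀ x t, 0 ≤ Khat x t) →
        (∀ x t, 2 * L * (n : ℝ) ^ (-(1 : ℝ) + 1 / (2 * (k : ℝ))) < |t| → Khat x t = 0) →
        SteinIdentity (cwMeasure ρ n) (cwW n k) R Khat (cwg ρ k)
          (2 * L * (n : ℝ) ^ (-(1 : ℝ) + 1 / (2 * (k : ℝ)))) →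
        -- condition (2.8): `E(K̂₁ | W) ≤ d₀`
        (∀ᵐ x ∂cwMeasure ρ n,
          ((cwMeasure ρ n)[KhatOne Khat (2 * L * (n : ℝ) ^ (-(1 : ℝ) + 1 / (2 * (k : ℝ)))) |
              MeasurableSpace.comap (cwW n k) Real.measurableSpace]) x ≤ d₀) →
        -- condition (2.9): `δ |g(W)| ≤ d₁`
        (∀ᵐ x ∂cwMeasure ρ n,
          2 * L * (n : ℝ) ^ (-(1 : ℝ) + 1 / (2 * (k : ℝ))) * |cwg ρ k (cwW n k x)| ≤ d₁) →
        -- condition (r2.2-a)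
        (∀ᵐ x ∂cwMeasure ρ n,
          |R x| ≤ α * (|cwg ρ k (cwW n k x)| + 1)
            + d₂ * (if κ < |cwW n k x| then (1 : ℝ) else 0)) →
        -- condition (r2.2-b): `d₂ P(|W| > κ) ≤ d₃ e^{−2 s₀/(d₁ δ)}`
        (d₂ * ((cwMeasure ρ n) {x | κ < |cwW n k x|}).toReal
          ≤ d₃ * Real.exp (-2 * sSup {s : ℝ |
              2 * L * (n : ℝ) ^ (-(1 : ℝ) + 1 / (2 * (k : ℝ))) * s * cwg ρ k s ^ 2 ≤ 1} /
            (d₁ * (2 * L * (n : ℝ) ^ (-(1 : ℝ) + 1 / (2 * (k : ℝ))))))) →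
        ∀ s : ℝ, 0 < s →
          (∫ x, |(1 / (n : ℝ)) * ∑ i,
                ((x i) ^ 2 - ((cwMeasure ρ n)[fun y => (y i) ^ 2 | Fi n i]) x)|
              * zeta (cwG ρ k) s (cwW n k x) ∂cwMeasure ρ n)
            ≤ C * (n : ℝ) ^ (-(1 : ℝ) / (k : ℝ)) * (1 + |s| ^ 2)
              * ∫ x, zeta (cwG ρ k) s (cwW n k x) ∂cwMeasure ρ n := by
  have hρ := ae_abs_le_of_measure_Icc_eq_one hL
  have hder' : ∀ i < 2 * k, iteratedDeriv i (hfun ρ) 0 = 0 := fun i hi => hder i (by omega)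
  obtain ⟨C, hC, hmain⟩ := stmt_18_general hρ
    (fun _ => hfun_pos_of_deriv_ne_zero hρ (fun s => mt (hroot s).1) (by omega) hder' hpos)
    hk hder' hpos
  exact ⟨C, hC, fun n hn _ _ _ _ _ _ _ _ _ _ s hs => hmain n (by omega) s hs.le⟩
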